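/- arXiv:1811.00977 — 2 statements merged into one kernel-verified Lean document; each statement's English description precedes it below -/
import Mathlib

section
/- Let p be an odd prime, G a finite powerful p-group, and i ≥ 2. Then [Ω_i(G^p), Ω_i(G^p)] ≤ (Ω_i(G^{p²}))^p; that is, the chain Ω_i(G^p) ≥ Ω_i(G^{p²}) ≥ (Ω_i(G^{p²}))^p ≥ ⋯ ≥ (Ω_i(G^{p²}))^{p^{i-2}} ≥ {1} is a powerfully central chain of Ω_i(G^p). -/
/-!
The theorem follows from two order bounds valid in every finite powerful `p`-group `G`, `p` odd
(`OmegaBounds`):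

* the elements killed by `p ^ i` form a subgroup, so `Ω_i(G ^ (p ^ j))` is simply the set of
  elements of `G ^ (p ^ j)` killed by `p ^ i`;
* if `a ^ p ^ (i + 1) = 1` and `b ^ p ^ i = 1`, then `⁅a ^ p ^ j, b ^ p ^ k⁆` is killed by
  `p ^ (i - j - k)` whenever `j + k ≤ i`.

Together with the classical facts that every element of `G ^ (p ^ k)` is a `p ^ k`-th power
(`mem_powSeries_iff`) and `[G ^ (p ^ j), G ^ (p ^ k)] ≤ G ^ (p ^ (j + k + 1))`
(`commutator_mem_powSeries`), they give the chain. Let `x = u ^ p ^ r` with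
`u ^ p ^ (i + 2) = 1`, and `y = b ^ p` with `b ^ p ^ (i + 1) = 1`. Then `⁅x, y⁆` lies in
`G ^ (p ^ (r + 2))` and is killed by `p ^ (i - r)`, so it equals `v ^ p ^ r` for some
`v ∈ Ω_i(G ^ (p ^ 2)) = V` (`commutator_eq_pow`). The case `r = 1` covers `[W, W] ≤ V ^ p`, and
`r = m + 2` covers `[V ^ (p ^ m), W]`.

Both bounds are proved by induction on `|G|`. If `G` is non-abelian, each `⟨h⟩ G ^ p` is a proper
normal powerful subgroup, and `M = Ω_1(G ^ p)` is non-trivial, so the bounds hold in these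
subgroups and in `G ⧸ M`. For `i ≥ 2` the elements `a ^ p ^ i` and `b ^ p ^ (i - 1)` lie in `M`,
and the bound in `G ⧸ M` loses a single factor `p`. That factor is recovered by collecting a
`p`-th power in a commutator: `[a ^ p, b]` is trivial once `c = [a, b]` and `[c, a]` are elements of
`M` with `[c, a]` centralised by `a`, because `M` is abelian of exponent `p` and `p` divides
`p.choose 2`. The required centralisation is an instance of the bound in `⟨a⟩ G ^ p` or
`⟨b⟩ G ^ p`, since an element of order `p` lying deep in the power series is a high power of
an element of `G ^ p`. The case `i = 1` is deduced in the same way from the case `i = 2` for the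
same group. The product bound for `i = 1` follows because `[y, x]` is then central
in `⟨x, y⟩`.
-/

/-- The subgroup generated by the `n`-th powers of the elements of `H`. -/
def subgroupPow {G : Type*} [Group G] (H : Subgroup G) (n : ℕ) : Subgroup G :=
  Subgroup.closure {x | ∃ h ∈ H, h ^ n = x}

/-- `Ω_i(H)`: the subgroup generated by the elements of `H` whose order divides `p ^ i`. -/
def omegaSubgroup {G : Type*} [Group G] (p i : ℕ) (H : Subgroup G) : Subgroup G :=
  Subgroup.closure {x | x ∈ H ∧ x ^ p ^ i = 1}

/-- A finite `p`-group `G` is powerful if `[G,G] ≤ G^p` when `p` is odd,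
and `[G,G] ≤ G^4` when `p = 2`. -/
def IsPowerful (p : ℕ) (G : Type*) [Group G] : Prop :=
  if p = 2 then commutator G ≤ subgroupPow (⊤ : Subgroup G) 4
  else commutator G ≤ subgroupPow (⊤ : Subgroup G) p

/-- The subgroup of `n`-th powers of the whole group is normal (indeed characteristic). -/
instance subgroupPow_top_normal {G : Type*} [Group G] (n : ℕ) :
    (subgroupPow (⊤ : Subgroup G) n).Normal := by
  constructor
  intro x hx g
  have key : Subgroup.map (MulAut.conj g).toMonoidHom (subgroupPow (⊤ : Subgroup G) n)
      ≤ subgroupPow (⊤ : Subgroup G) n := by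
    rw [subgroupPow, MonoidHom.map_closure]
    apply Subgroup.closure_le _ |>.mpr
    rintro y ⟨z, ⟨h, -, rfl⟩, rfl⟩
    exact Subgroup.subset_closure ⟨(MulAut.conj g) h, trivial, by
      simp [((MulAut.conj g).toMonoidHom.map_pow h n).symm]⟩
  have hmem : (MulAut.conj g) x ∈
      Subgroup.map (MulAut.conj g).toMonoidHom (subgroupPow (⊤ : Subgroup G) n) :=
    Subgroup.mem_map_of_mem _ hx
  simpa [MulAut.conj_apply] using key hmem

/-- A powerfully central chain `{1} = H 0 ≤ H 1 ≤ ⋯ ≤ H n = G` of length `n`: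
`[H (k+1), G] ≤ (H k)^p` for all `k < n`. -/
def IsPowerfullyCentralChain (p : ℕ) {G : Type*} [Group G] (n : ℕ) (H : ℕ → Subgroup G) : Prop :=
  H 0 = ⊥ ∧ H n = ⊤ ∧ (∀ k, k < n → H k ≤ H (k + 1)) ∧
    ∀ k, k < n → ⁅H (k + 1), (⊤ : Subgroup G)⁆ ≤ subgroupPow (H k) p

/-- A group is powerfully nilpotent if it is powerful and admits a powerfully central chain. -/
def IsPowerfullyNilpotent (p : ℕ) (G : Type*) [Group G] : Prop :=
  IsPowerful p G ∧ ∃ (n : ℕ) (H : ℕ → Subgroup G), IsPowerfullyCentralChain p n H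

/-- The powerful nilpotency class: the least possible length of a powerfully central chain. -/
noncomputable def powerfulNilpotencyClass (p : ℕ) (G : Type*) [Group G] : ℕ :=
  sInf {n | ∃ H : ℕ → Subgroup G, IsPowerfullyCentralChain p n H}


/-- A powerfully central chain for the subgroup `K` of `G`, of length `n`, with all
subgroups taken inside the ambient group `G`:
`{1} = H 0 ≤ H 1 ≤ ⋯ ≤ H n = K` and `[H (k+1), K] ≤ (H k)^p` for all `k < n`. -/
def IsPowerfullyCentralChainFor (p : ℕ) {G : Type*} [Group G] (K : Subgroup G) (n : ℕ)
    (H : ℕ → Subgroup G) : Prop :=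
  H 0 = ⊥ ∧ H n = K ∧ (∀ k, k < n → H k ≤ H (k + 1)) ∧
    ∀ k, k < n → ⁅H (k + 1), K⁆ ≤ subgroupPow (H k) p

namespace PowerfulOmega

open scoped commutatorElement

/-! ### Commutator identities and power subgroups -/

/-- In a group where `⁅v, u⁆` commutes with `u` and `v`, powers of products follow the
class-two formula. -/
theorem mul_pow_class_two {G : Type*} [Group G] (u v : G) (hu : Commute ⁅v, u⁆ u)
    (hv : Commute ⁅v, u⁆ v) (n : ℕ) :
    (u * v) ^ n = u ^ n * v ^ n * ⁅v, u⁆ ^ (n.choose 2) := by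
  set z := ⁅v, u⁆ with hz
  have hvu : v * u = z * u * v := by rw [hz, commutatorElement_def]; group
  have key : ∀ n : ℕ, v ^ n * u = u * v ^ n * z ^ n := by
    intro n
    induction n with
    | zero => simp
    | succ n ih =>
      calc v ^ (n + 1) * u = v ^ n * (v * u) := by rw [pow_succ]; group
        _ = v ^ n * (z * u * v) := by rw [hvu]
        _ = v ^ n * (u * v * z) := by rw [hu.eq, mul_assoc u z v, hv.eq, ← mul_assoc u v z]
        _ = (v ^ n * u) * v * z := by simp only [mul_assoc]
        _ = u * v ^ n * (z ^ n * v) * z := by rw [ih]; group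
        _ = u * v ^ n * (v * z ^ n) * z := by rw [(hv.pow_left n).eq]
        _ = _ := by rw [pow_succ, pow_succ]; group
  induction n with
  | zero => simp
  | succ n ih =>
    have hc : (n + 1).choose 2 = n.choose 2 + n := by
      rw [Nat.choose_succ_succ' n 1]; simp [add_comm]
    have h1 : Commute (z ^ n.choose 2) (u * v) := (hu.mul_right hv).pow_left _
    calc (u * v) ^ (n + 1) = u ^ n * v ^ n * (z ^ n.choose 2 * (u * v)) := by
          rw [pow_succ, ih]; group
      _ = u ^ n * (v ^ n * u) * v * z ^ n.choose 2 := by rw [h1.eq]; group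
      _ = u ^ n * u * v ^ n * (z ^ n * v) * z ^ n.choose 2 := by rw [key]; group
      _ = u ^ n * u * v ^ n * (v * z ^ n) * z ^ n.choose 2 := by rw [(hv.pow_left n).eq]
      _ = _ := by rw [hc, pow_succ, pow_succ, add_comm, pow_add]; group

theorem pow_choose_two_eq_one {G : Type*} [Group G] {p : ℕ} (hp : p.Prime) (hp2 : p ≠ 2)
    {z : G} (hz : z ^ p = 1) : z ^ (p.choose 2) = 1 := by
  have h2 : 2 < p := lt_of_le_of_ne hp.two_le (Ne.symm hp2)
  obtain ⟨k, hk⟩ := hp.dvd_choose_self (k := 2) (by norm_num) h2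
  rw [hk, pow_mul, hz, one_pow]

theorem commutator_pow_left {G : Type*} [Group G] {a b : G} (h : Commute ⁅a, b⁆ a) (n : ℕ) :
    ⁅a ^ n, b⁆ = ⁅a, b⁆ ^ n := by
  have h1 : b * a⁻¹ * b⁻¹ = a⁻¹ * ⁅a, b⁆ := by rw [commutatorElement_def]; group
  have h2 : b * (a ^ n)⁻¹ * b⁻¹ = (a ^ n)⁻¹ * ⁅a, b⁆ ^ n := by
    rw [← inv_pow, ← h.inv_right.symm.mul_pow, ← h1, conj_pow]
  calc ⁅a ^ n, b⁆ = a ^ n * (b * (a ^ n)⁻¹ * b⁻¹) := by rw [commutatorElement_def]; group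
    _ = _ := by rw [h2]; group

/-- The commutator identity behind every collection step: for odd `p`, the power `a ^ p` commutes
with `b` as soon as `⁅a, b⁆` and `⁅⁅a, b⁆, a⁆` are killed by `p` and the latter is central in
`⟨a, ⁅a, b⁆⟩`. -/
theorem commute_pow_of_class_three {G : Type*} [Group G] {p : ℕ} (hp : p.Prime) (hp2 : p ≠ 2)
    {a b : G} (hfa : Commute ⁅⁅a, b⁆, a⁆ a) (hfc : Commute ⁅⁅a, b⁆, a⁆ ⁅a, b⁆)
    (hc : ⁅a, b⁆ ^ p = 1) (hf : ⁅⁅a, b⁆, a⁆ ^ p = 1) : Commute (a ^ p) b := by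
  set c := ⁅a, b⁆ with hcdef
  set f := ⁅c, a⁆ with hfdef
  have h1 : b * a⁻¹ * b⁻¹ = a⁻¹ * c := by rw [hcdef, commutatorElement_def]; group
  have hz : ⁅c, a⁻¹⁆ = f⁻¹ := by
    have e1 : ⁅c, a⁻¹⁆ = a⁻¹ * f⁻¹ * a := by
      rw [hfdef, commutatorElement_def, commutatorElement_def]; group
    rw [e1, mul_assoc, hfa.inv_left.eq]; group
  have h2 := mul_pow_class_two a⁻¹ c (by rw [hz]; exact hfa.inv_left.inv_right)
    (by rw [hz]; exact hfc.inv_left) p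
  rw [hz, hc, pow_choose_two_eq_one hp hp2 (by rw [inv_pow, hf, inv_one]), ← h1, conj_pow,
    mul_one, mul_one, inv_pow] at h2
  have h3 : Commute b (a ^ p)⁻¹ := by
    unfold Commute SemiconjBy
    calc b * (a ^ p)⁻¹ = (b * (a ^ p)⁻¹ * b⁻¹) * b := by group
      _ = _ := by rw [h2]
  simpa using h3.inv_right.symm

/-- The same identity with the `p`-th power in the second slot. -/
theorem commute_pow_right_of_class_three {G : Type*} [Group G] {p : ℕ} (hp : p.Prime)
    (hp2 : p ≠ 2) {a b : G} (hfb : Commute ⁅⁅a, b⁆, b⁆ b) (hfc : Commute ⁅⁅a, b⁆, b⁆ ⁅a, b⁆)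
    (hc : ⁅a, b⁆ ^ p = 1) (hf : ⁅⁅a, b⁆, b⁆ ^ p = 1) : Commute a (b ^ p) := by
  set c := ⁅a, b⁆ with hcdef
  set f := ⁅c, b⁆ with hfdef
  have h1 : a * b * a⁻¹ = c * b := by rw [hcdef, commutatorElement_def]; group
  have hz : ⁅b, c⁆ = f⁻¹ := by rw [hfdef, commutatorElement_inv]
  have h2 := mul_pow_class_two c b (by rw [hz]; exact hfc.inv_left)
    (by rw [hz]; exact hfb.inv_left) p
  rw [hz, hc, pow_choose_two_eq_one hp hp2 (by rw [inv_pow, hf, inv_one]), ← h1, conj_pow,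
    mul_one, one_mul] at h2
  unfold Commute SemiconjBy
  calc a * b ^ p = (a * b ^ p * a⁻¹) * a := by group
    _ = _ := by rw [h2]

theorem subgroupPow_normal {G : Type*} [Group G] (N : Subgroup G) [N.Normal] (n : ℕ) :
    (subgroupPow N n).Normal := by
  constructor
  intro x hx g
  have key : subgroupPow N n ≤ (subgroupPow N n).comap (MulAut.conj g).toMonoidHom := by
    refine (Subgroup.closure_le _).2 ?_
    rintro _ ⟨h, hh, rfl⟩
    refine Subgroup.subset_closure ⟨g * h * g⁻¹, ‹N.Normal›.conj_mem h hh g, ?_⟩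
    simp [conj_pow]
  simpa using key hx

theorem pow_mem_subgroupPow {G : Type*} [Group G] {N : Subgroup G} {n : ℕ} {x : G} (hx : x ∈ N) :
    x ^ n ∈ subgroupPow N n := Subgroup.subset_closure ⟨x, hx, rfl⟩

theorem map_subgroupPow {G K : Type*} [Group G] [Group K] (f : G →* K) (N : Subgroup G) (n : ℕ) :
    (subgroupPow N n).map f = subgroupPow (N.map f) n := by
  unfold subgroupPow
  rw [MonoidHom.map_closure]
  congr 1
  ext y
  constructor
  · rintro ⟨_, ⟨h, hh, rfl⟩, rfl⟩
    exact ⟨f h, Subgroup.mem_map_of_mem f hh, (map_pow f h n).symm⟩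
  · rintro ⟨_, ⟨h, hh, rfl⟩, rfl⟩
    exact ⟨h ^ n, ⟨h, hh, rfl⟩, map_pow f h n⟩

theorem subgroupPow_mono {G : Type*} [Group G] {N M : Subgroup G} (h : N ≤ M) (n : ℕ) :
    subgroupPow N n ≤ subgroupPow M n :=
  Subgroup.closure_mono fun _ ⟨y, hy, e⟩ => ⟨y, h hy, e⟩

theorem subgroupPow_le {G : Type*} [Group G] (N : Subgroup G) (n : ℕ) :
    subgroupPow N n ≤ N := by
  refine (Subgroup.closure_le _).2 ?_
  rintro _ ⟨y, hy, rfl⟩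
  exact N.pow_mem hy n


/-! ### Powerful `p`-groups for odd `p` -/

/-- In a finite `p`-group, `p`-th powers are non-generators; so a group generated by one element
and the `p`-th powers is cyclic. -/
theorem commute_of_zpowers_sup_eq_top {G : Type*} [Group G] [Finite G] {p : ℕ} (hp : p.Prime)
    (hG : IsPGroup p G) (h : G) (hT : Subgroup.zpowers h ⊔ subgroupPow (⊤ : Subgroup G) p = ⊤)
    (x y : G) : Commute x y := by
  have := Fact.mk hp
  have := hG.isNilpotent
  have hfr : subgroupPow (⊤ : Subgroup G) p ≤ frattini G := by
    refine le_iInf₂ fun K hK => (Subgroup.closure_le _).2 ?_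
    rintro _ ⟨x, -, rfl⟩
    have : K.Normal :=
      Subgroup.NormalizerCondition.normal_of_coatom K Group.normalizerCondition_of_isNilpotent hK
    by_contra hx
    have hx1 : (x : G ⧸ K) ^ p ≠ 1 := by
      rw [← QuotientGroup.mk_pow, Ne, QuotientGroup.eq_one_iff]; exact hx
    have : Nontrivial (G ⧸ K) := ⟨_, _, hx1⟩
    obtain ⟨n, hn0, hn⟩ := (hG.to_quotient K).nontrivial_iff_card.1 inferInstance
    obtain ⟨z, hz⟩ := exists_prime_orderOf_dvd_card' (G := G ⧸ K) p
      (hn ▸ dvd_pow_self p hn0.ne')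
    have hle : K ≤ (Subgroup.zpowers z).comap (QuotientGroup.mk' K) := by
      intro k hk
      have : (QuotientGroup.mk' K) k = 1 := (QuotientGroup.eq_one_iff k).2 hk
      rw [Subgroup.mem_comap, this]; exact Subgroup.one_mem _
    obtain ⟨w, rfl⟩ := QuotientGroup.mk'_surjective K z
    rcases hK.le_iff.1 hle with h1 | h1
    · have : (QuotientGroup.mk' K x) ∈ Subgroup.zpowers (QuotientGroup.mk' K w) := by
        rw [← Subgroup.mem_comap, h1]; trivial
      obtain ⟨m, hm⟩ := Subgroup.mem_zpowers_iff.1 this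
      apply hx1
      change (QuotientGroup.mk' K x) ^ p = 1
      rw [← hm, ← zpow_natCast, zpow_comm, zpow_natCast, ← hz, pow_orderOf_eq_one, one_zpow]
    · have hw : w ∈ K := by
        rw [← h1]; exact Subgroup.mem_zpowers _
      have : QuotientGroup.mk' K w = 1 := (QuotientGroup.eq_one_iff w).2 hw
      rw [this, orderOf_one] at hz
      exact hp.one_lt.ne hz
  have htop : Subgroup.zpowers h = ⊤ := by
    apply frattini_nongenerating
    rw [eq_top_iff, ← hT]
    exact sup_le_sup_left hfr _
  have hx : x ∈ Subgroup.zpowers h := htop ▸ Subgroup.mem_top x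
  have hy : y ∈ Subgroup.zpowers h := htop ▸ Subgroup.mem_top y
  obtain ⟨m, rfl⟩ := Subgroup.mem_zpowers_iff.1 hx
  obtain ⟨n, rfl⟩ := Subgroup.mem_zpowers_iff.1 hy
  exact (Commute.refl h).zpow_zpow m n

theorem le_of_le_sup_commutator {G : Type*} [Group G] [Group.IsNilpotent G] (K R : Subgroup G)
    [R.Normal] (h : K ≤ R ⊔ ⁅K, (⊤ : Subgroup G)⁆) : K ≤ R := by
  obtain ⟨n, hn⟩ := Subgroup.nilpotent_iff_lowerCentralSeries.1 ‹Group.IsNilpotent G›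
  have key : ∀ n, K ≤ R ⊔ (⊤ : Subgroup G).lowerCentralSeries n := by
    intro n
    induction n with
    | zero => exact le_sup_of_le_right le_top
    | succ n ih =>
      refine h.trans (sup_le le_sup_left ?_)
      refine Subgroup.commutator_le.2 fun x hx g _ => ?_
      obtain ⟨r, hr, l, hl, rfl⟩ := Subgroup.mem_sup_of_normal_right.1 (ih hx)
      have e : ⁅r * l, g⁆ = r * ⁅l, g⁆ * (g * r⁻¹ * g⁻¹) := by
        simp only [commutatorElement_def]; group
      rw [e]
      refine Subgroup.mul_mem _ (Subgroup.mul_mem _ (Subgroup.mem_sup_left hr) ?_)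
        (Subgroup.mem_sup_left (‹R.Normal›.conj_mem _ (R.inv_mem hr) g))
      exact Subgroup.mem_sup_right (Subgroup.commutator_mem_commutator hl (Subgroup.mem_top g))
  simpa [hn] using key n

theorem commute_mk_iff {G : Type*} [Group G] (R : Subgroup G) [R.Normal] (x y : G) :
    Commute (x : G ⧸ R) (y : G ⧸ R) ↔ ⁅x, y⁆ ∈ R := by
  rw [← commutatorElement_eq_one_iff_commute, ← QuotientGroup.eq_one_iff]
  rfl

/-- If `N` is powerfully embedded in `G`, that is `[N, G] ≤ N ^ p`, then so is `N ^ p`. -/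
theorem powerfullyEmbedded_pow {G : Type*} [Group G] [Finite G] {p : ℕ} (hp : p.Prime)
    (hp2 : p ≠ 2) (hG : IsPGroup p G) (N : Subgroup G) [N.Normal]
    (hN : ⁅N, (⊤ : Subgroup G)⁆ ≤ subgroupPow N p) :
    ⁅subgroupPow N p, (⊤ : Subgroup G)⁆ ≤ subgroupPow (subgroupPow N p) p := by
  have := Fact.mk hp
  have := hG.isNilpotent
  have := subgroupPow_normal N p
  have := subgroupPow_normal (subgroupPow N p) p
  set N1 := subgroupPow N p
  set N2 := subgroupPow N1 p
  set K := ⁅N1, (⊤ : Subgroup G)⁆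
  refine le_of_le_sup_commutator K N2 ?_
  -- It suffices to see that `N1` becomes central modulo `R`, where `[N1, G]` is already central.
  set R := N2 ⊔ ⁅K, (⊤ : Subgroup G)⁆
  have hcent : N1 ≤ (Subgroup.center (G ⧸ R)).comap (QuotientGroup.mk' R) := by
    refine (Subgroup.closure_le _).2 ?_
    rintro _ ⟨n, hn, rfl⟩
    refine Subgroup.mem_center_iff.2 fun g' => ?_
    obtain ⟨g, rfl⟩ := QuotientGroup.mk'_surjective R g'
    have hc : ⁅n, g⁆ ∈ N1 := hN (Subgroup.commutator_mem_commutator hn (Subgroup.mem_top g))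
    have hf : ⁅⁅n, g⁆, n⁆ ∈ K := Subgroup.commutator_mem_commutator hc (Subgroup.mem_top n)
    have hfc : ∀ y : G, Commute (QuotientGroup.mk' R ⁅⁅n, g⁆, n⁆) (QuotientGroup.mk' R y) :=
      fun y => (commute_mk_iff R _ y).2 (Subgroup.mem_sup_right
        (Subgroup.commutator_mem_commutator hf (Subgroup.mem_top y)))
    have hcp : (QuotientGroup.mk' R ⁅n, g⁆) ^ p = 1 := by
      rw [← map_pow]
      exact (QuotientGroup.eq_one_iff _).2 (Subgroup.mem_sup_left (pow_mem_subgroupPow hc))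
    have hfp : (QuotientGroup.mk' R ⁅⁅n, g⁆, n⁆) ^ p = 1 := by
      have := hfc ⁅n, g⁆
      rw [map_commutatorElement] at this ⊢
      rw [← commutator_pow_left this, hcp, commutatorElement_one_left]
    have h1 := hfc n
    have h2 := hfc ⁅n, g⁆
    simp only [map_commutatorElement] at h1 h2 hcp hfp
    rw [map_pow]
    exact (commute_pow_of_class_three hp hp2 h1 h2 hcp hfp).symm
  refine Subgroup.commutator_le.2 fun x hx g _ => ?_
  rw [← commute_mk_iff R]
  exact (Subgroup.mem_center_iff.1 (hcent hx) (g : G ⧸ R)).symm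

/-- The iterated power series `G, G ^ p, (G ^ p) ^ p, …`; for powerful `G` its `k`-th term is
`G ^ (p ^ k)`. -/
def powSeries (p : ℕ) (G : Type*) [Group G] : ℕ → Subgroup G
  | 0 => ⊤
  | k + 1 => subgroupPow (powSeries p G k) p

instance powSeries_normal (p : ℕ) (G : Type*) [Group G] (k : ℕ) : (powSeries p G k).Normal := by
  induction k with
  | zero => exact Subgroup.normal_top
  | succ k ih => exact subgroupPow_normal _ p

theorem powSeries_succ_le (p : ℕ) (G : Type*) [Group G] (k : ℕ) :
    powSeries p G (k + 1) ≤ powSeries p G k := subgroupPow_le _ _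

theorem powSeries_anti (p : ℕ) (G : Type*) [Group G] : Antitone (powSeries p G) :=
  antitone_nat_of_succ_le (powSeries_succ_le p G)

/-- Powerfulness for odd `p`, in terms of elements. -/
def OddPowerful (p : ℕ) (G : Type*) [Group G] : Prop :=
  ∀ x y : G, ⁅x, y⁆ ∈ subgroupPow (⊤ : Subgroup G) p

theorem powSeries_commutator_top {G : Type*} [Group G] [Finite G] {p : ℕ} (hp : p.Prime)
    (hp2 : p ≠ 2) (hG : IsPGroup p G) (hpow : OddPowerful p G) (k : ℕ) :
    ⁅powSeries p G k, (⊤ : Subgroup G)⁆ ≤ powSeries p G (k + 1) := by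
  induction k with
  | zero => exact Subgroup.commutator_le.2 fun x _ y _ => hpow x y
  | succ k ih => exact powerfullyEmbedded_pow hp hp2 hG _ ih

theorem mem_subgroupPow_coe {G : Type*} [Group G] {H : Subgroup G} {n : ℕ} {x : H}
    (hx : (x : G) ∈ subgroupPow H n) : x ∈ subgroupPow (⊤ : Subgroup H) n := by
  have := map_subgroupPow H.subtype ⊤ n
  rw [← MonoidHom.range_eq_map, Subgroup.range_subtype] at this
  rw [← this] at hx
  obtain ⟨y, hy, e⟩ := hx
  rwa [← Subtype.ext e]

/-- The subgroup `⟨h⟩ G ^ p`. In a non-abelian powerful group these are proper powerful subgroups,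
which is what drives inductions on the order. -/
def adjoinPow (p : ℕ) {G : Type*} [Group G] (h : G) : Subgroup G :=
  Subgroup.zpowers h ⊔ subgroupPow (⊤ : Subgroup G) p

theorem mem_adjoinPow_self (p : ℕ) {G : Type*} [Group G] (h : G) : h ∈ adjoinPow p h :=
  Subgroup.mem_sup_left (Subgroup.mem_zpowers h)

theorem powSeries_one_le_adjoinPow (p : ℕ) {G : Type*} [Group G] (h : G) :
    powSeries p G 1 ≤ adjoinPow p h := le_sup_right

theorem conj_mem_adjoinPow {p : ℕ} {G : Type*} [Group G] (hpow : OddPowerful p G) (h g : G)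
    {x : G} (hx : x ∈ adjoinPow p h) : g * x * g⁻¹ ∈ adjoinPow p h := by
  have e : g * x * g⁻¹ = ⁅g, x⁆ * x := by rw [commutatorElement_def]; group
  rw [e]
  exact Subgroup.mul_mem _ (powSeries_one_le_adjoinPow p h (hpow g x)) hx

theorem adjoinPow_powerful {G : Type*} [Group G] [Finite G] {p : ℕ} (hp : p.Prime)
    (hp2 : p ≠ 2) (hG : IsPGroup p G) (hpow : OddPowerful p G) (h : G) :
    OddPowerful p (adjoinPow p h) := by
  rintro ⟨x, hx⟩ ⟨y, hy⟩
  apply mem_subgroupPow_coe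
  change ⁅x, y⁆ ∈ _
  refine subgroupPow_mono (powSeries_one_le_adjoinPow p h) p ?_
  change ⁅x, y⁆ ∈ powSeries p G 2
  obtain ⟨_, ⟨m, rfl⟩, u, hu, rfl⟩ := Subgroup.mem_sup_of_normal_right.1 hx
  obtain ⟨_, ⟨n, rfl⟩, v, hv, rfl⟩ := Subgroup.mem_sup_of_normal_right.1 hy
  have hc : ∀ u ∈ powSeries p G 1, ∀ g : G, Commute (u : G ⧸ powSeries p G 2) g :=
    fun u hu g => (commute_mk_iff _ u g).2 (powSeries_commutator_top hp hp2 hG hpow 1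
      (Subgroup.commutator_mem_commutator hu (Subgroup.mem_top g)))
  rw [← commute_mk_iff]
  simp only [QuotientGroup.mk_mul, QuotientGroup.mk_zpow]
  refine Commute.mul_left (Commute.mul_right ((Commute.refl _).zpow_zpow m n) ?_) ?_
  · exact ((hc v hv h).symm).zpow_left m
  · exact ((hc u hu h).zpow_right n).mul_right (hc u hu v)

theorem card_subgroup_lt {G : Type*} [Group G] [Finite G] {H : Subgroup G} (h : H ≠ ⊤) :
    Nat.card H < Nat.card G :=
  lt_of_le_of_ne (Subgroup.card_le_card_group H) fun e => h (Subgroup.eq_top_of_card_eq H e)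

theorem exists_pow_eq_of_mem {p : ℕ} (hp : p.Prime) (hp2 : p ≠ 2) (n : ℕ) :
    ∀ (G : Type*) [Group G] [Finite G], Nat.card G = n → IsPGroup p G → OddPowerful p G →
      ∀ g ∈ subgroupPow (⊤ : Subgroup G) p, ∃ x : G, x ^ p = g := by
  induction n using Nat.strong_induction_on with
  | _ n ih =>
  intro G _ _ hcard hG hpow g hg
  have hcen : ∀ u ∈ powSeries p G 1, ∀ g : G, Commute (u : G ⧸ powSeries p G 2) g :=
    fun u hu g => (commute_mk_iff _ u g).2 (powSeries_commutator_top hp hp2 hG hpow 1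
      (Subgroup.commutator_mem_commutator hu (Subgroup.mem_top g)))
  -- Modulo `(G ^ p) ^ p` the `p`-power map is a homomorphism.
  have happrox : ∃ x : G, (x : G ⧸ powSeries p G 2) ^ p = g := by
    induction hg using Subgroup.closure_induction with
    | mem g hg =>
      obtain ⟨x, -, rfl⟩ := hg
      exact ⟨x, rfl⟩
    | one => exact ⟨1, by simp⟩
    | mul g g' _ _ h1 h2 =>
      obtain ⟨x, hx⟩ := h1
      obtain ⟨y, hy⟩ := h2
      refine ⟨x * y, ?_⟩
      have hc : ⁅y, x⁆ ∈ powSeries p G 1 := hpow y x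
      have hcp : (⁅(y : G ⧸ powSeries p G 2), (x : G ⧸ powSeries p G 2)⁆) ^ p = 1 := by
        change ((⁅y, x⁆ ^ p : G) : G ⧸ powSeries p G 2) = 1
        rw [QuotientGroup.eq_one_iff]
        exact pow_mem_subgroupPow hc
      rw [QuotientGroup.mk_mul, mul_pow_class_two _ _ (hcen _ hc x) (hcen _ hc y),
        pow_choose_two_eq_one hp hp2 hcp, hx, hy, mul_one, QuotientGroup.mk_mul]
    | inv g _ h1 =>
      obtain ⟨x, hx⟩ := h1
      exact ⟨x⁻¹, by rw [QuotientGroup.mk_inv, inv_pow, hx, QuotientGroup.mk_inv]⟩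
  obtain ⟨x, hx⟩ := happrox
  by_cases hT : adjoinPow p x = ⊤
  · have hcomm := commute_of_zpowers_sup_eq_top hp hG x hT
    clear hx
    induction hg using Subgroup.closure_induction with
    | mem g hg => obtain ⟨x, -, rfl⟩ := hg; exact ⟨x, rfl⟩
    | one => exact ⟨1, by simp⟩
    | mul g g' _ _ h1 h2 =>
      obtain ⟨x, rfl⟩ := h1
      obtain ⟨y, rfl⟩ := h2
      exact ⟨x * y, (hcomm x y).mul_pow p⟩
    | inv g _ h1 => obtain ⟨x, rfl⟩ := h1; exact ⟨x⁻¹, inv_pow x p⟩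
  · have hz : (x ^ p)⁻¹ * g ∈ powSeries p G 2 := by
      rw [← QuotientGroup.eq]; exact hx
    have hg' : g ∈ subgroupPow (adjoinPow p x) p := by
      have := Subgroup.mul_mem _ (pow_mem_subgroupPow (n := p) (mem_adjoinPow_self p x))
        (subgroupPow_mono (powSeries_one_le_adjoinPow p x) p hz)
      simpa using this
    obtain ⟨t, ht⟩ := ih _ (hcard ▸ card_subgroup_lt hT) (adjoinPow p x) rfl
      (hG.to_subgroup _) (adjoinPow_powerful hp hp2 hG hpow x)
      ⟨g, subgroupPow_le _ _ hg'⟩ (mem_subgroupPow_coe hg')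
    exact ⟨t, congrArg Subtype.val ht⟩

theorem mem_powSeries_iff {G : Type*} [Group G] [Finite G] {p : ℕ} (hp : p.Prime)
    (hp2 : p ≠ 2) (hG : IsPGroup p G) (hpow : OddPowerful p G) (k : ℕ) (x : G) :
    x ∈ powSeries p G k ↔ ∃ g : G, g ^ p ^ k = x := by
  induction k generalizing x with
  | zero => simp [powSeries]
  | succ k ih =>
    constructor
    · intro hx
      have hP : OddPowerful p (powSeries p G k) := by
        rintro ⟨a, ha⟩ ⟨b, hb⟩
        exact mem_subgroupPow_coe (powSeries_commutator_top hp hp2 hG hpow k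
          (Subgroup.commutator_mem_commutator ha (Subgroup.mem_top b)))
      obtain ⟨⟨y, hy⟩, hyx⟩ := exists_pow_eq_of_mem hp hp2 _ (powSeries p G k) rfl
        (hG.to_subgroup _) hP ⟨x, powSeries_succ_le p G k hx⟩ (mem_subgroupPow_coe hx)
      obtain ⟨g, rfl⟩ := (ih y).1 hy
      exact ⟨g, by rw [pow_succ, pow_mul]; exact congrArg Subtype.val hyx⟩
    · rintro ⟨g, rfl⟩
      rw [pow_succ, pow_mul]
      exact pow_mem_subgroupPow ((ih _).2 ⟨g, rfl⟩)

theorem subgroupPow_top_eq_powSeries {G : Type*} [Group G] [Finite G] {p : ℕ} (hp : p.Prime)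
    (hp2 : p ≠ 2) (hG : IsPGroup p G) (hpow : OddPowerful p G) (k : ℕ) :
    subgroupPow (⊤ : Subgroup G) (p ^ k) = powSeries p G k := by
  refine le_antisymm ((Subgroup.closure_le _).2 ?_) fun x hx => ?_
  · rintro _ ⟨g, -, rfl⟩
    exact (mem_powSeries_iff hp hp2 hG hpow k _).2 ⟨g, rfl⟩
  · obtain ⟨g, rfl⟩ := (mem_powSeries_iff hp hp2 hG hpow k _).1 hx
    exact pow_mem_subgroupPow (Subgroup.mem_top g)

theorem commutator_mem_powSeries {G : Type*} [Group G] [Finite G] {p : ℕ} (hp : p.Prime)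
    (hp2 : p ≠ 2) (hG : IsPGroup p G) (hpow : OddPowerful p G) (k : ℕ) :
    ∀ j, ∀ x ∈ powSeries p G j, ∀ y ∈ powSeries p G k, ⁅x, y⁆ ∈ powSeries p G (j + k + 1) := by
  induction k with
  | zero =>
    intro j x hx y _
    exact powSeries_commutator_top hp hp2 hG hpow j
      (Subgroup.commutator_mem_commutator hx (Subgroup.mem_top y))
  | succ k ih =>
    intro j x hx y hy
    obtain ⟨g, rfl⟩ := (mem_powSeries_iff hp hp2 hG hpow _ _).1 hy
    have hu : g ^ p ^ k ∈ powSeries p G k := (mem_powSeries_iff hp hp2 hG hpow _ _).2 ⟨g, rfl⟩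
    rw [pow_succ, pow_mul]
    set u := g ^ p ^ k
    set R := powSeries p G (j + (k + 1) + 1)
    have hc : ⁅u, x⁆ ∈ powSeries p G (j + k + 1) := by
      rw [← commutatorElement_inv]; exact Subgroup.inv_mem _ (ih j x hx u hu)
    -- Modulo `R` the commutator `⁅u, x⁆` is centralised by `u` and killed by `p`.
    have hcu : Commute (⁅(u : G ⧸ R), (x : G ⧸ R)⁆) (u : G ⧸ R) :=
      (commute_mk_iff R ⁅u, x⁆ u).2 (powSeries_anti p G (by omega) (ih _ _ hc u hu))
    have h1 := commutator_pow_left hcu p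
    have h2 : (⁅(u : G ⧸ R), (x : G ⧸ R)⁆) ^ p = 1 := by
      change ((⁅u, x⁆ ^ p : G) : G ⧸ R) = 1
      rw [QuotientGroup.eq_one_iff]
      exact pow_mem_subgroupPow hc
    rw [h2, commutatorElement_eq_one_iff_commute] at h1
    exact (commute_mk_iff R _ _).1 h1.symm

/-! ### Orders of products and commutators in powerful `p`-groups -/

/-- The two order bounds proved simultaneously by induction on the order of a powerful group:
the elements killed by `p ^ i` are closed under products, and if `a`, `b` are killed by
`p ^ (i + 1)` and `p ^ i`, then `⁅a ^ p ^ j, b ^ p ^ k⁆` is killed by `p ^ (i - j - k)`. -/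
structure OmegaBounds (p : ℕ) (G : Type*) [Group G] : Prop where
  mul : ∀ (i : ℕ) (x y : G), x ^ p ^ i = 1 → y ^ p ^ i = 1 → (x * y) ^ p ^ i = 1
  comm : ∀ (i j k : ℕ) (a b : G), a ^ p ^ (i + 1) = 1 → b ^ p ^ i = 1 → j + k ≤ i →
    ⁅a ^ p ^ j, b ^ p ^ k⁆ ^ p ^ (i - j - k) = 1

theorem OmegaBounds.commute {p : ℕ} {G : Type*} [Group G] (h : OmegaBounds p G) {i j k : ℕ}
    {a b : G} (ha : a ^ p ^ (i + 1) = 1) (hb : b ^ p ^ i = 1) (hjk : j + k = i) :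
    Commute (a ^ p ^ j) (b ^ p ^ k) := by
  have := h.comm i j k a b ha hb hjk.le
  rw [show i - j - k = 0 by omega, pow_zero, pow_one] at this
  exact commutatorElement_eq_one_iff_commute.1 this

theorem OmegaBounds.mul_mem {p : ℕ} {G : Type*} [Group G] {T : Subgroup G}
    (h : OmegaBounds p T) {i : ℕ} {x y : G} (hxT : x ∈ T) (hyT : y ∈ T) (hx : x ^ p ^ i = 1)
    (hy : y ^ p ^ i = 1) : (x * y) ^ p ^ i = 1 :=
  congrArg Subtype.val (h.mul i ⟨x, hxT⟩ ⟨y, hyT⟩ (Subtype.ext hx) (Subtype.ext hy))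

theorem OmegaBounds.commute_mem {p : ℕ} {G : Type*} [Group G] {T : Subgroup G}
    (h : OmegaBounds p T) {i j k : ℕ} {a b : G} (haT : a ∈ T) (hbT : b ∈ T)
    (ha : a ^ p ^ (i + 1) = 1) (hb : b ^ p ^ i = 1) (hjk : j + k = i) :
    Commute (a ^ p ^ j) (b ^ p ^ k) := by
  have : Commute ((⟨a, haT⟩ : T) ^ p ^ j) ((⟨b, hbT⟩ : T) ^ p ^ k) :=
    h.commute (Subtype.ext ha) (Subtype.ext hb) hjk
  exact this.map T.subtype

/-- Conjugates of `x` stay in `⟨x⟩ G ^ p`, so the bound on products there bounds `⁅x, g⁆`. -/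
theorem commutator_pow_eq_one {p : ℕ} {G : Type*} [Group G] (hpow : OddPowerful p G) {x : G}
    (hT : OmegaBounds p (adjoinPow p x)) {i : ℕ} (hx : x ^ p ^ i = 1) (g : G) :
    ⁅x, g⁆ ^ p ^ i = 1 := by
  have e : ⁅x, g⁆ = x * (g * x⁻¹ * g⁻¹) := by rw [commutatorElement_def]; group
  rw [e]
  have hxT := mem_adjoinPow_self p x
  refine hT.mul_mem hxT (conj_mem_adjoinPow hpow x g (Subgroup.inv_mem _ hxT)) hx ?_
  rw [conj_pow, inv_pow, hx]; simp

section Step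

variable {p : ℕ} {G : Type*} [Group G]

/-- `Ω_1(G ^ p)` as the set of elements of `G ^ p` killed by `p`; this is a subgroup by the bound
on products in `⟨1⟩ G ^ p = G ^ p`. -/
def omegaOnePow (hT : OmegaBounds p (adjoinPow p (1 : G))) : Subgroup G where
  carrier := {z | z ∈ powSeries p G 1 ∧ z ^ p = 1}
  one_mem' := ⟨Subgroup.one_mem _, one_pow p⟩
  mul_mem' := by
    rintro x y ⟨hx, hx1⟩ ⟨hy, hy1⟩
    refine ⟨Subgroup.mul_mem _ hx hy, ?_⟩
    simpa using hT.mul_mem (i := 1) (powSeries_one_le_adjoinPow p 1 hx)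
      (powSeries_one_le_adjoinPow p 1 hy) (by simpa using hx1) (by simpa using hy1)
  inv_mem' := by
    rintro x ⟨hx, hx1⟩
    exact ⟨Subgroup.inv_mem _ hx, by rw [inv_pow, hx1, inv_one]⟩

theorem omegaOnePow_normal (hT : OmegaBounds p (adjoinPow p (1 : G))) :
    (omegaOnePow hT).Normal := by
  refine ⟨fun x hx g => ⟨(powSeries_normal p G 1).conj_mem x hx.1 g, ?_⟩⟩
  rw [conj_pow, hx.2]; simp

variable [Finite G]

theorem pow_mem_powSeries (hp : p.Prime) (hp2 : p ≠ 2) (hG : IsPGroup p G)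
    (hpow : OddPowerful p G) (k : ℕ) (g : G) : g ^ p ^ k ∈ powSeries p G k :=
  (mem_powSeries_iff hp hp2 hG hpow k _).2 ⟨g, rfl⟩

theorem omegaOnePow_commute (hp : p.Prime) (hp2 : p ≠ 2) (hG : IsPGroup p G)
    (hpow : OddPowerful p G) (ihT : ∀ h : G, OmegaBounds p (adjoinPow p h)) {x y : G}
    (hx : x ∈ omegaOnePow (ihT 1)) (hy : y ∈ omegaOnePow (ihT 1)) : Commute x y := by
  obtain ⟨h, rfl⟩ := (mem_powSeries_iff hp hp2 hG hpow 1 x).1 hx.1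
  have := (ihT h).commute_mem (i := 1) (j := 1) (k := 0) (mem_adjoinPow_self p h)
    (powSeries_one_le_adjoinPow p h hy.1)
    (by have := hx.2; rwa [← pow_mul, ← pow_succ] at this) (by simpa using hy.2) rfl
  simpa using this

/-- An element of order `p` in `G ^ (p ^ (n + 1))` is a `p ^ n`-th power of an element `e` of
`G ^ p` with `e ^ p ^ (n + 1) = 1`. -/
theorem exists_pow_eq_of_mem_omegaOnePow (hp : p.Prime) (hp2 : p ≠ 2) (hG : IsPGroup p G)
    (hpow : OddPowerful p G) {c : G} (hc : c ^ p = 1) {n : ℕ} (hn : c ∈ powSeries p G (n + 1)) :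
    ∃ e ∈ powSeries p G 1, e ^ p ^ n = c ∧ e ^ p ^ (n + 1) = 1 := by
  obtain ⟨d, rfl⟩ := (mem_powSeries_iff hp hp2 hG hpow _ _).1 hn
  refine ⟨d ^ p, by simpa using pow_mem_powSeries hp hp2 hG hpow 1 d, ?_, ?_⟩
  · rw [← pow_mul, ← pow_succ']
  · rw [← pow_mul, ← pow_succ', pow_succ, pow_mul, hc]

/-- The commutator bound for `i ≥ 2`, from the bounds in the proper subgroups `⟨h⟩ G ^ p` and in
the quotient by `Ω_1(G ^ p)`. -/
theorem comm_bound_of_two_le (hp : p.Prime) (hp2 : p ≠ 2) (hG : IsPGroup p G)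
    (hpow : OddPowerful p G) (ihT : ∀ h : G, OmegaBounds p (adjoinPow p h))
    (ihQ : ∀ N : Subgroup G, [N.Normal] → N = omegaOnePow (ihT 1) → OmegaBounds p (G ⧸ N))
    (i j k : ℕ) (hi : 2 ≤ i) (a b : G) (ha : a ^ p ^ (i + 1) = 1) (hb : b ^ p ^ i = 1)
    (hjk : j + k ≤ i) : ⁅a ^ p ^ j, b ^ p ^ k⁆ ^ p ^ (i - j - k) = 1 := by
  set M := omegaOnePow (ihT 1) with hM
  have : M.Normal := omegaOnePow_normal (ihT 1)
  obtain ⟨i, rfl⟩ : ∃ i', i = i' + 1 := ⟨i - 1, by omega⟩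
  -- Since `i ≥ 2`, the top powers of `a` and `b` lie in `M`, so `G ⧸ M` gains a factor `p`.
  have hMpow : ∀ (x : G) (n : ℕ), 1 ≤ n → x ^ p ^ (n + 1) = 1 → (x : G ⧸ M) ^ p ^ n = 1 := by
    intro x n hn hx
    rw [← QuotientGroup.mk_pow, QuotientGroup.eq_one_iff]
    exact ⟨powSeries_anti p G hn (pow_mem_powSeries hp hp2 hG hpow n x),
      by rw [← pow_mul, ← pow_succ, hx]⟩
  have hquot : ∀ j k, j + k ≤ i → ⁅a ^ p ^ j, b ^ p ^ k⁆ ^ p ^ (i - j - k) ∈ M := by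
    intro j k hjk
    have h := (ihQ M rfl).comm i j k (a : G ⧸ M) (b : G ⧸ M) (hMpow a (i + 1) (by omega) ha)
      (hMpow b i (by omega) hb) hjk
    rw [← QuotientGroup.eq_one_iff]
    exact h
  have hdepth : ∀ j k, ⁅a ^ p ^ j, b ^ p ^ k⁆ ∈ powSeries p G (j + k + 1) := fun j k =>
    commutator_mem_powSeries hp hp2 hG hpow k j _ (pow_mem_powSeries hp hp2 hG hpow j a) _
      (pow_mem_powSeries hp hp2 hG hpow k b)
  rcases hjk.lt_or_eq with hlt | heq
  · have h := (hquot j k (by omega)).2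
    rwa [← pow_mul, ← pow_succ, show i - j - k + 1 = i + 1 - j - k by omega] at h
  rw [show i + 1 - j - k = 0 by omega, pow_zero, pow_one, commutatorElement_eq_one_iff_commute]
  have hquot0 : ∀ j k, j + k = i → ⁅a ^ p ^ j, b ^ p ^ k⁆ ∈ M := by
    intro j k hjk
    have := hquot j k hjk.le
    rwa [show i - j - k = 0 by omega, pow_zero, pow_one] at this
  have hcases : (∃ j', j = j' + 2) ∨ (∃ k', k = k' + 2) ∨ (j = 1 ∧ k = 1 ∧ i = 1) := by
    rcases Nat.lt_or_ge j 2 with h | h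
    · rcases Nat.lt_or_ge k 2 with h' | h'
      · exact Or.inr (Or.inr (by omega))
      · exact Or.inr (Or.inl ⟨k - 2, by omega⟩)
    · exact Or.inl ⟨j - 2, by omega⟩
  rcases hcases with ⟨j', rfl⟩ | ⟨k', rfl⟩ | ⟨rfl, rfl, rfl⟩
  · -- `c = ⁅a ^ p ^ (j - 1), b ^ p ^ k⁆` commutes with `a ^ p` inside `⟨a⟩ G ^ p`.
    have hc := hquot0 (j' + 1) k (by omega)
    obtain ⟨e, heP, hec, he1⟩ := exists_pow_eq_of_mem_omegaOnePow hp hp2 hG hpow hc.2 (n := i)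
      (powSeries_anti p G (by omega) (hdepth (j' + 1) k))
    have h1 := (ihT a).commute_mem (i := i + 1) (j := 1) (k := i) (mem_adjoinPow_self p a)
      (powSeries_one_le_adjoinPow p a heP) ha he1 (by omega)
    rw [hec, pow_one] at h1
    have h2 : Commute ⁅a ^ p ^ (j' + 1), b ^ p ^ k⁆ (a ^ p ^ (j' + 1)) := by
      have := h1.symm.pow_right (p ^ j')
      rwa [← pow_mul, ← pow_succ'] at this
    have h3 := commutator_pow_left h2 p
    rwa [hc.2, ← pow_mul, ← pow_succ, commutatorElement_eq_one_iff_commute] at h3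
  · have hc := hquot0 j (k' + 1) (by omega)
    obtain ⟨e, heP, hec, he1⟩ := exists_pow_eq_of_mem_omegaOnePow hp hp2 hG hpow hc.2 (n := i)
      (powSeries_anti p G (by omega) (hdepth j (k' + 1)))
    have h1 := (ihT b).commute_mem (i := i + 1) (j := i) (k := 1)
      (powSeries_one_le_adjoinPow p b heP) (mem_adjoinPow_self p b)
      (by rw [pow_succ, pow_mul, he1, one_pow]) hb (by omega)
    rw [hec, pow_one] at h1
    have h2 : Commute ⁅b ^ p ^ (k' + 1), a ^ p ^ j⁆ (b ^ p ^ (k' + 1)) := by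
      have := h1.pow_right (p ^ k')
      rw [← pow_mul, ← pow_succ'] at this
      rw [← commutatorElement_inv]
      exact this.inv_left
    have h3 := commutator_pow_left h2 p
    rw [← commutatorElement_inv (a ^ p ^ j) (b ^ p ^ (k' + 1)), inv_pow, hc.2, inv_one, ← pow_mul, ← pow_succ,
      commutatorElement_eq_one_iff_commute] at h3
    exact h3.symm
  · -- Here `c = ⁅a ^ p, b⁆` need not commute with `b`, but `⁅c, b⁆` lies deep enough to do so.
    have hc := hquot0 1 0 rfl
    have hcd := hdepth 1 0
    simp only [pow_zero, pow_one] at hc hcd ⊢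
    have hcb : ⁅⁅a ^ p, b⁆, b⁆ ∈ powSeries p G 3 :=
      commutator_mem_powSeries hp hp2 hG hpow 0 2 _ hcd b (Subgroup.mem_top b)
    have hcM : ⁅⁅a ^ p, b⁆, b⁆ ∈ M := by
      have e : ⁅⁅a ^ p, b⁆, b⁆ = ⁅a ^ p, b⁆ * (b * ⁅a ^ p, b⁆⁻¹ * b⁻¹) := by
        rw [commutatorElement_def ⁅a ^ p, b⁆]; group
      rw [e]
      exact M.mul_mem hc (‹M.Normal›.conj_mem _ (M.inv_mem hc) b)
    obtain ⟨e, heP, hec, he1⟩ := exists_pow_eq_of_mem_omegaOnePow hp hp2 hG hpow hcM.2 (n := 2)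
      hcb
    have h1 := (ihT b).commute_mem (i := 2) (j := 2) (k := 0)
      (powSeries_one_le_adjoinPow p b heP) (mem_adjoinPow_self p b) he1 hb rfl
    rw [hec, pow_zero, pow_one] at h1
    exact commute_pow_right_of_class_three hp hp2 h1
      (omegaOnePow_commute hp hp2 hG hpow ihT hcM hc) hc.2 hcM.2

/-- The inductive step for the two order bounds. -/
theorem omegaBounds_step (hp : p.Prime) (hp2 : p ≠ 2) (hG : IsPGroup p G)
    (hpow : OddPowerful p G) (ihT : ∀ h : G, OmegaBounds p (adjoinPow p h))
    (ihQ : ∀ N : Subgroup G, [N.Normal] → N = omegaOnePow (ihT 1) → OmegaBounds p (G ⧸ N)) :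
    OmegaBounds p G := by
  set M := omegaOnePow (ihT 1) with hM
  have : M.Normal := omegaOnePow_normal (ihT 1)
  have hcomm2 := comm_bound_of_two_le hp hp2 hG hpow ihT ihQ
  have hMcomm : ∀ x : G, x ^ p = 1 → ∀ g, ⁅x, g⁆ ∈ M := by
    intro x hx g
    refine ⟨hpow x g, ?_⟩
    simpa using commutator_pow_eq_one hpow (ihT x) (i := 1) (by simpa using hx) g
  have hkey : ∀ a b : G, a ^ p ^ 2 = 1 → b ^ p = 1 → Commute (a ^ p) b := by
    intro a b ha hb
    have hc : ⁅a, b⁆ ∈ M := by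
      rw [← commutatorElement_inv]; exact M.inv_mem (hMcomm b hb a)
    have hf : ⁅⁅a, b⁆, a⁆ ∈ M := hMcomm _ hc.2 a
    have hfP : ⁅⁅a, b⁆, a⁆ ∈ powSeries p G 2 :=
      commutator_mem_powSeries hp hp2 hG hpow 0 1 _ hc.1 a (Subgroup.mem_top a)
    obtain ⟨d, hd⟩ := (mem_powSeries_iff hp hp2 hG hpow 2 _).1 hfP
    have hd3 : d ^ p ^ 3 = 1 := by rw [pow_succ, pow_mul, hd, hf.2]
    -- The bound for `i = 2` in `G` itself makes `⁅⁅a, b⁆, a⁆` commute with `a`.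
    have hfa : Commute ⁅⁅a, b⁆, a⁆ a := by
      have := hcomm2 2 2 0 le_rfl d a hd3 ha le_rfl
      simp only [pow_zero, pow_one, Nat.sub_self] at this
      rw [← hd]
      exact commutatorElement_eq_one_iff_commute.1 this
    exact commute_pow_of_class_three hp hp2 hfa
      (omegaOnePow_commute hp hp2 hG hpow ihT hf hc) hc.2 hf.2
  constructor
  · intro i x y hx hy
    rcases i with _ | _ | i
    · simp only [pow_zero, pow_one] at hx hy ⊢
      rw [hx, hy, mul_one]
    · simp only [zero_add, pow_one] at hx hy ⊢
      have hc := hMcomm y hy x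
      obtain ⟨d, hd⟩ := (mem_powSeries_iff hp hp2 hG hpow 1 _).1 hc.1
      have hd2 : d ^ p ^ 2 = 1 := by rw [pow_succ, pow_mul, hd, hc.2]
      rw [pow_one] at hd
      have hcx : Commute ⁅y, x⁆ x := hd ▸ hkey d x hd2 hx
      have hcy : Commute ⁅y, x⁆ y := hd ▸ hkey d y hd2 hy
      rw [mul_pow_class_two x y hcx hcy, hx, hy, pow_choose_two_eq_one hp hp2 hc.2]
      simp
    · have hMpow : ∀ x : G, x ^ p ^ (i + 1 + 1) = 1 → (x : G ⧸ M) ^ p ^ (i + 1) = 1 := by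
        intro x hx
        rw [← QuotientGroup.mk_pow, QuotientGroup.eq_one_iff]
        exact ⟨powSeries_anti p G (by omega) (pow_mem_powSeries hp hp2 hG hpow (i + 1) x),
          by rw [← pow_mul, ← pow_succ, hx]⟩
      have h := (ihQ M rfl).mul (i + 1) x y (hMpow x hx) (hMpow y hy)
      rw [← QuotientGroup.mk_mul, ← QuotientGroup.mk_pow, QuotientGroup.eq_one_iff] at h
      rw [pow_succ, pow_mul]
      exact h.2
  · intro i j k a b ha hb hjk
    rcases i with _ | _ | i
    · obtain ⟨rfl, rfl⟩ : j = 0 ∧ k = 0 := by omega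
      simp only [pow_zero, pow_one] at hb ⊢
      simp [hb]
    · simp only [zero_add, pow_one] at hb ⊢
      obtain ⟨rfl, rfl⟩ | ⟨rfl, rfl⟩ | ⟨rfl, rfl⟩ :
          (j = 0 ∧ k = 0) ∨ (j = 1 ∧ k = 0) ∨ (j = 0 ∧ k = 1) := by omega
      · have h := (hMcomm b hb a).2
        simp only [pow_zero, pow_one, Nat.sub_zero]
        rw [← commutatorElement_inv, inv_pow, h, inv_one]
      · simpa using commutatorElement_eq_one_iff_commute.2 (hkey a b ha hb)
      · simp [hb]
    · exact hcomm2 (i + 1 + 1) j k (by omega) a b ha hb hjk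

end Step

theorem omegaBounds_of_powerful {p : ℕ} (hp : p.Prime) (hp2 : p ≠ 2) (n : ℕ) :
    ∀ (G : Type*) [Group G] [Finite G], Nat.card G = n → IsPGroup p G → OddPowerful p G →
      OmegaBounds p G := by
  induction n using Nat.strong_induction_on with
  | _ n ih =>
  intro G _ _ hcard hG hpow
  have habel : (∀ x y : G, Commute x y) → OmegaBounds p G := fun hc =>
    ⟨fun i x y hx hy => by rw [(hc x y).mul_pow, hx, hy, mul_one], fun i j k a b _ _ _ => by
      rw [commutatorElement_eq_one_iff_commute.2 (hc _ _), one_pow]⟩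
  by_cases hex : ∃ h : G, adjoinPow p h = ⊤
  · obtain ⟨h, hT⟩ := hex
    exact habel (commute_of_zpowers_sup_eq_top hp hG h hT)
  by_cases hbot : powSeries p G 1 = ⊥
  · refine habel fun x y => commutatorElement_eq_one_iff_commute.1 ?_
    have : ⁅x, y⁆ ∈ powSeries p G 1 := hpow x y
    rwa [hbot, Subgroup.mem_bot] at this
  have ihT : ∀ h : G, OmegaBounds p (adjoinPow p h) := fun h =>
    ih _ (hcard ▸ card_subgroup_lt fun e => hex ⟨h, e⟩) _ rfl (hG.to_subgroup _)
      (adjoinPow_powerful hp hp2 hG hpow h)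
  refine omegaBounds_step hp hp2 hG hpow ihT fun N _ hN => ?_
  have hNbot : N ≠ ⊥ := by
    have := Fact.mk hp
    have : Nontrivial (powSeries p G 1) := (Subgroup.nontrivial_iff_ne_bot _).2 hbot
    obtain ⟨m, hm0, hm⟩ := (hG.to_subgroup (powSeries p G 1)).nontrivial_iff_card.1 inferInstance
    obtain ⟨z, hz⟩ := exists_prime_orderOf_dvd_card' (G := powSeries p G 1) p
      (hm ▸ dvd_pow_self p hm0.ne')
    have hzN : (z : G) ∈ N := by
      rw [hN]
      exact ⟨z.2, congrArg Subtype.val (hz ▸ pow_orderOf_eq_one z)⟩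
    intro e
    rw [e, Subgroup.mem_bot, OneMemClass.coe_eq_one] at hzN
    rw [hzN, orderOf_one] at hz
    exact hp.one_lt.ne hz
  have hlt : Nat.card (G ⧸ N) < n := by
    have h1 := Subgroup.card_eq_card_quotient_mul_card_subgroup N
    have h2 : 1 < Nat.card N := Subgroup.one_lt_card_iff_ne_bot N |>.2 hNbot
    have h3 : 0 < Nat.card (G ⧸ N) := Nat.card_pos
    rw [← hcard, h1]
    nlinarith
  refine ih _ hlt (G ⧸ N) rfl (hG.to_quotient N) ?_
  intro x y
  obtain ⟨x, rfl⟩ := QuotientGroup.mk'_surjective N x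
  obtain ⟨y, rfl⟩ := QuotientGroup.mk'_surjective N y
  have := Subgroup.mem_map_of_mem (QuotientGroup.mk' N) (hpow x y)
  rw [map_subgroupPow, map_commutatorElement] at this
  exact subgroupPow_mono le_top p this

/-! ### The chain -/

theorem mem_omegaSubgroup_iff {p : ℕ} {G : Type*} [Group G] (hB : OmegaBounds p G) (i : ℕ)
    (H : Subgroup G) (x : G) : x ∈ omegaSubgroup p i H ↔ x ∈ H ∧ x ^ p ^ i = 1 := by
  refine ⟨fun hx => ?_, fun hx => Subgroup.subset_closure hx⟩
  induction hx using Subgroup.closure_induction with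
  | mem x hx => exact hx
  | one => exact ⟨H.one_mem, one_pow _⟩
  | mul x y _ _ hx hy => exact ⟨H.mul_mem hx.1 hy.1, hB.mul i x y hx.2 hy.2⟩
  | inv x _ hx => exact ⟨H.inv_mem hx.1, by rw [inv_pow, hx.2, inv_one]⟩

/-- Commutators of elements at depth `r` with elements of `Ω_i(G ^ p)` are `p ^ r`-th powers of
elements of `Ω_i(G ^ (p ^ 2))`, and trivial for `r = i`. -/
theorem commutator_eq_pow {p : ℕ} {G : Type*} [Group G] [Finite G] (hp : p.Prime) (hp2 : p ≠ 2)
    (hG : IsPGroup p G) (hpow : OddPowerful p G) (hB : OmegaBounds p G) {i r s : ℕ} (hr : r ≤ i)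
    (hs : r + s ≤ i + 2) {x y : G} (hx : x ∈ powSeries p G r) (hx1 : x ^ p ^ s = 1)
    (hy : y ∈ powSeries p G 1) (hy1 : y ^ p ^ i = 1) :
    (∃ v ∈ omegaSubgroup p i (powSeries p G 2), v ^ p ^ r = ⁅x, y⁆) ∧
      ⁅x, y⁆ ^ p ^ (i - r) = 1 := by
  have hd : ⁅x, y⁆ ∈ powSeries p G (r + 2) :=
    commutator_mem_powSeries hp hp2 hG hpow 1 r x hx y hy
  obtain ⟨u, rfl⟩ := (mem_powSeries_iff hp hp2 hG hpow _ _).1 hx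
  obtain ⟨b, rfl⟩ := (mem_powSeries_iff hp hp2 hG hpow _ _).1 hy
  have hu : u ^ p ^ (i + 1 + 1) = 1 := by
    rw [← pow_mul, ← pow_add] at hx1
    rw [show i + 1 + 1 = (r + s) + (i + 2 - (r + s)) by omega, pow_add, pow_mul, hx1, one_pow]
  have hb : b ^ p ^ (i + 1) = 1 := by
    rw [← pow_mul, ← pow_add, add_comm] at hy1
    exact hy1
  have ho := hB.comm (i + 1) r 1 u b hu hb (by omega)
  rw [show i + 1 - r - 1 = i - r by omega] at ho
  refine ⟨?_, ho⟩
  obtain ⟨w, hw⟩ := (mem_powSeries_iff hp hp2 hG hpow _ _).1 hd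
  refine ⟨w ^ p ^ 2, (mem_omegaSubgroup_iff hB i _ _).2
    ⟨pow_mem_powSeries hp hp2 hG hpow 2 w, ?_⟩, ?_⟩
  · rw [← hw, ← pow_mul, ← pow_add] at ho
    rw [← pow_mul, ← pow_add, show 2 + i = r + 2 + (i - r) by omega, ho]
  · rw [← pow_mul, ← pow_add, add_comm, hw]

theorem subgroupPow_omega_le {p : ℕ} {G : Type*} [Group G] [Finite G] (hp : p.Prime)
    (hp2 : p ≠ 2) (hG : IsPGroup p G) (hpow : OddPowerful p G) (hB : OmegaBounds p G) {i m : ℕ}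
    (hm : m ≤ i) :
    subgroupPow (omegaSubgroup p i (powSeries p G 2)) (p ^ m) ≤
      omegaSubgroup p (i - m) (powSeries p G (m + 2)) := by
  refine (Subgroup.closure_le _).2 ?_
  rintro _ ⟨v, hv, rfl⟩
  obtain ⟨hv1, hv2⟩ := (mem_omegaSubgroup_iff hB i _ v).1 hv
  obtain ⟨g, rfl⟩ := (mem_powSeries_iff hp hp2 hG hpow _ _).1 hv1
  refine Subgroup.subset_closure ⟨?_, ?_⟩
  · rw [← pow_mul, ← pow_add, add_comm]
    exact pow_mem_powSeries hp hp2 hG hpow _ g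
  · rw [← pow_mul, ← pow_add, show m + (i - m) = i by omega, hv2]

theorem subgroupPow_succ_le {p : ℕ} {G : Type*} [Group G] (V : Subgroup G) (m : ℕ) :
    subgroupPow V (p ^ (m + 1)) ≤ subgroupPow V (p ^ m) := by
  refine (Subgroup.closure_le _).2 ?_
  rintro _ ⟨v, hv, rfl⟩
  rw [SetLike.mem_coe, pow_succ', pow_mul]
  exact pow_mem_subgroupPow (V.pow_mem hv p)

end PowerfulOmega

open PowerfulOmega in
theorem omega_statement_9 (p : ℕ) (hp : p.Prime) (hp2 : p ≠ 2) (G : Type*) [Group G]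
    [Finite G] (hG : IsPGroup p G) (hpow : IsPowerful p G) (i : ℕ) (hi : 2 ≤ i)
    (W V : Subgroup G) (hW : W = omegaSubgroup p i (subgroupPow (⊤ : Subgroup G) p))
    (hV : V = omegaSubgroup p i (subgroupPow (⊤ : Subgroup G) (p ^ 2))) :
    ⁅W, W⁆ ≤ subgroupPow V p ∧
      IsPowerfullyCentralChainFor p W i
        (fun k => if k = 0 then ⊥ else if k = i then W
          else subgroupPow V (p ^ (i - 1 - k))) := by
  have hpow' : OddPowerful p G := fun x y => by
    rw [IsPowerful, if_neg hp2] at hpow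
    exact hpow (Subgroup.commutator_mem_commutator (Subgroup.mem_top x) (Subgroup.mem_top y))
  have hB := omegaBounds_of_powerful hp hp2 _ G rfl hG hpow'
  change W = omegaSubgroup p i (powSeries p G 1) at hW
  rw [subgroupPow_top_eq_powSeries hp hp2 hG hpow'] at hV
  have hWmem : ∀ y ∈ W, y ∈ powSeries p G 1 ∧ y ^ p ^ i = 1 := fun y hy =>
    (mem_omegaSubgroup_iff hB i _ y).1 (hW ▸ hy)
  have hVW : V ≤ W := by
    rw [hV, hW]
    exact Subgroup.closure_mono fun x hx => ⟨powSeries_succ_le p G 1 hx.1, hx.2⟩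
  have hWW : ⁅W, W⁆ ≤ subgroupPow V p := by
    refine Subgroup.commutator_le.2 fun x hx y hy => ?_
    obtain ⟨⟨v, hv, e⟩, -⟩ := commutator_eq_pow hp hp2 hG hpow' hB (r := 1) (s := i) (i := i)
      (by omega) (by omega) (hWmem x hx).1 (hWmem x hx).2 (hWmem y hy).1 (hWmem y hy).2
    rw [← e, pow_one]
    exact pow_mem_subgroupPow (hV ▸ hv)
  have hVtop : V ≤ subgroupPow V (p ^ 0) := fun v hv => by
    have := pow_mem_subgroupPow (n := p ^ 0) hv
    rw [pow_zero, pow_one] at this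
    rwa [pow_zero]
  refine ⟨hWW, ?_, ?_, ?_, ?_⟩
  · simp
  · simp [show i ≠ 0 by omega]
  · intro k hk
    rcases Nat.eq_zero_or_pos k with rfl | hk0
    · simp
    simp only [hk0.ne', hk.ne, if_false, Nat.succ_ne_zero]
    split_ifs with h
    · exact (subgroupPow_le _ _).trans hVW
    · rw [show i - 1 - k = i - 1 - (k + 1) + 1 by omega]
      exact subgroupPow_succ_le V _
  · intro k hk
    simp only [hk.ne, if_false, Nat.succ_ne_zero]
    by_cases h : k + 1 = i
    · rw [if_pos h, if_neg (by omega), show i - 1 - k = 0 by omega]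
      exact hWW.trans (subgroupPow_mono hVtop p)
    rw [if_neg h]
    obtain ⟨m, hm⟩ : ∃ m, m = i - 1 - (k + 1) := ⟨_, rfl⟩
    rw [← hm]
    refine Subgroup.commutator_le.2 fun x hx y hy => ?_
    rw [hV] at hx
    obtain ⟨hx1, hx2⟩ := (mem_omegaSubgroup_iff hB _ _ x).1
      (subgroupPow_omega_le hp hp2 hG hpow' hB (show m ≤ i by omega) hx)
    obtain ⟨⟨v, hv, e⟩, ho⟩ := commutator_eq_pow hp hp2 hG hpow' hB (r := m + 2) (s := i - m)
      (i := i) (by omega) (by omega) hx1 hx2 (hWmem y hy).1 (hWmem y hy).2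
    split_ifs with hk0
    · -- At the bottom of the chain `m + 2 = i`, and the commutator is trivial.
      rw [show i - (m + 2) = 0 by omega, pow_zero, pow_one] at ho
      rw [ho]
      exact Subgroup.one_mem _
    · rw [← e, show i - 1 - k = m + 1 by omega,
        show v ^ p ^ (m + 2) = (v ^ p ^ (m + 1)) ^ p by rw [← pow_mul, ← pow_succ]]
      exact pow_mem_subgroupPow (pow_mem_subgroupPow (hV ▸ hv))
end

section
/- Let p be an odd prime and G a finite powerful p-group. Then for every i ≥ 1 the subgroup Ω_i(G^p) is powerfully nilpotent, and its powerful nilpotency class is at most i. -/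
section Helpers

open scoped commutatorElement

/-! ### Commutator and power formulas in class two -/

/-- The Hall formula in class two: the commutator `[b, a]` is only assumed to commute with `a` and `b`. -/
theorem class_two_mul_pow {G : Type*} [Group G] {a b : G} (ha : Commute ⁅b, a⁆ a)
    (hb : Commute ⁅b, a⁆ b) (n : ℕ) :
    (a * b) ^ n = a ^ n * b ^ n * ⁅b, a⁆ ^ (n.choose 2) := by
  have hba : ∀ k : ℕ, b ^ k * a = a * b ^ k * ⁅b, a⁆ ^ k := by
    intro k
    induction k with
    | zero => simp
    | succ k ih =>
      have h1 : b * a = a * b * ⁅b, a⁆ := by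
        rw [mul_assoc, ← hb.eq, ← mul_assoc, ← ha.eq, commutatorElement_def]; group
      calc b ^ (k + 1) * a = b ^ k * (b * a) := by rw [pow_succ, mul_assoc]
        _ = (b ^ k * a) * b * ⁅b, a⁆ := by rw [h1]; simp only [mul_assoc]
        _ = a * b ^ k * (⁅b, a⁆ ^ k * b) * ⁅b, a⁆ := by rw [ih]; simp only [mul_assoc]
        _ = a * b ^ (k + 1) * ⁅b, a⁆ ^ (k + 1) := by
          rw [(hb.pow_left k).eq, pow_succ, pow_succ]; simp only [mul_assoc]
  induction n with
  | zero => simp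
  | succ n ih =>
    have hc : (n + 1).choose 2 = n + n.choose 2 := by
      rw [Nat.choose_succ_succ' n 1, Nat.choose_one_right]
    have hab : Commute (⁅b, a⁆ ^ (n.choose 2)) (a * b) := (ha.mul_right hb).pow_left _
    calc (a * b) ^ (n + 1) = a ^ n * b ^ n * (⁅b, a⁆ ^ (n.choose 2) * (a * b)) := by
          rw [pow_succ, ih]; simp only [mul_assoc]
      _ = a ^ n * (b ^ n * a) * b * ⁅b, a⁆ ^ (n.choose 2) := by
          rw [hab.eq]; simp only [mul_assoc]
      _ = a ^ n * a * b ^ n * (⁅b, a⁆ ^ n * b) * ⁅b, a⁆ ^ (n.choose 2) := by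
          rw [hba]; simp only [mul_assoc]
      _ = a ^ (n + 1) * b ^ (n + 1) * ⁅b, a⁆ ^ ((n + 1).choose 2) := by
          rw [(hb.pow_left n).eq, hc, pow_add ⁅b, a⁆, pow_succ, pow_succ]; simp only [mul_assoc]

theorem commutator_pow_left {G : Type*} [Group G] {c x : G} (h : Commute ⁅c, x⁆ c) (n : ℕ) :
    ⁅c ^ n, x⁆ = ⁅c, x⁆ ^ n := by
  induction n with
  | zero => simp
  | succ n ih =>
    have e : ⁅c ^ (n + 1), x⁆ = c * ⁅c ^ n, x⁆ * c⁻¹ * ⁅c, x⁆ := by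
      simp only [commutatorElement_def, pow_succ']; group
    rw [e, ih, ← (h.pow_left n).eq, mul_inv_cancel_right, pow_succ]

/-- For odd `p` the exponent `p.choose 2` of the commutator is divisible by `p`. -/
theorem class_two_mul_pow_prime {G : Type*} [Group G] {p : ℕ} (hp : p.Prime) (hp2 : p ≠ 2)
    {a b : G} (ha : Commute ⁅b, a⁆ a) (hb : Commute ⁅b, a⁆ b) (hd : ⁅b, a⁆ ^ p = 1) :
    (a * b) ^ p = a ^ p * b ^ p := by
  have hlt : 2 < p := lt_of_le_of_ne hp.two_le (Ne.symm hp2)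
  obtain ⟨m, hm⟩ := hp.dvd_choose_self two_ne_zero hlt
  rw [class_two_mul_pow ha hb, hm, pow_mul, hd, one_pow, mul_one]

/-- Since `x ^ p * (x⁻¹ * c) ^ p = [x ^ p, u]` for `c = [x, u]`, this is the class-two power formula
applied to `x⁻¹` and `c`. -/
theorem commutator_pow_prime_eq_one {G : Type*} [Group G] {p : ℕ} (hp : p.Prime) (hp2 : p ≠ 2)
    {x u : G} (hc : ⁅x, u⁆ ^ p = 1) (hx : Commute ⁅⁅x, u⁆, x⁆ x)
    (hdc : Commute ⁅⁅x, u⁆, x⁆ ⁅x, u⁆) : ⁅x ^ p, u⁆ = 1 := by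
  have hd : ⁅⁅x, u⁆, x⁆ ^ p = 1 := by
    rw [← commutator_pow_left hdc, hc, commutatorElement_one_left]
  have e : ⁅⁅x, u⁆, x⁻¹⁆ = ⁅⁅x, u⁆, x⁆⁻¹ := by
    have h1 : ⁅⁅x, u⁆, x⁻¹⁆ = x⁻¹ * ⁅⁅x, u⁆, x⁆⁻¹ * x := by
      simp only [commutatorElement_def]; group
    rw [h1, mul_assoc, (hx.inv_left).eq, inv_mul_cancel_left]
  have h2 : ⁅x ^ p, u⁆ = x ^ p * (x⁻¹ * ⁅x, u⁆) ^ p := by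
    have h3 : x⁻¹ * ⁅x, u⁆ = u * x⁻¹ * u⁻¹ := by simp only [commutatorElement_def]; group
    rw [h3, conj_pow, commutatorElement_def, inv_pow]; group
  have h4 : (x⁻¹ * ⁅x, u⁆) ^ p = (x⁻¹) ^ p * ⁅x, u⁆ ^ p := by
    apply class_two_mul_pow_prime hp hp2
    · rw [e]; exact hx.inv_left.inv_right
    · rw [e]; exact hdc.inv_left
    · rw [e, inv_pow, hd, inv_one]
  rw [h2, h4, hc, inv_pow]; simp

theorem commute_mk_iff {G : Type*} [Group G] (M : Subgroup G) [M.Normal] (a b : G) :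
    Commute (a : G ⧸ M) (b : G ⧸ M) ↔ ⁅a, b⁆ ∈ M := by
  rw [← commutatorElement_eq_one_iff_commute, ← QuotientGroup.eq_one_iff]
  rfl

/-- The basic step of the whole argument: with `c = [x, u]` and `d = [c, x]`, the commutator
`[x ^ p, u]` lies in `M` if `c ^ p`, `[d, x]` and `[d, c]` do. -/
theorem commutator_pow_prime_mem {G : Type*} [Group G] {p : ℕ} (hp : p.Prime) (hp2 : p ≠ 2)
    (M : Subgroup G) (hM : M.Normal) {x u : G} (hc : ⁅x, u⁆ ^ p ∈ M)
    (hx : ⁅⁅⁅x, u⁆, x⁆, x⁆ ∈ M) (hdc : ⁅⁅⁅x, u⁆, x⁆, ⁅x, u⁆⁆ ∈ M) : ⁅x ^ p, u⁆ ∈ M := by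
  rw [← QuotientGroup.eq_one_iff] at hc ⊢
  rw [← commute_mk_iff] at hx hdc
  exact commutator_pow_prime_eq_one (x := (x : G ⧸ M)) (u := (u : G ⧸ M)) hp hp2 hc hx hdc

theorem mul_pow_prime_mem {G : Type*} [Group G] {p : ℕ} (hp : p.Prime) (hp2 : p ≠ 2)
    (M : Subgroup G) (hM : M.Normal) {a b : G} (ha : ⁅⁅b, a⁆, a⁆ ∈ M)
    (hb : ⁅⁅b, a⁆, b⁆ ∈ M) (hd : ⁅b, a⁆ ^ p ∈ M) :
    (a ^ p * b ^ p)⁻¹ * (a * b) ^ p ∈ M := by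
  rw [← commute_mk_iff] at ha hb
  rw [← QuotientGroup.eq_one_iff] at hd
  rw [← QuotientGroup.eq]
  exact (class_two_mul_pow_prime (a := (a : G ⧸ M)) (b := (b : G ⧸ M)) hp hp2 ha hb hd).symm

/-! ### The power series of a powerful `p`-group -/

theorem pow_mem_subgroupPow {G : Type*} [Group G] {H : Subgroup G} {x : G} (hx : x ∈ H) (n : ℕ) :
    x ^ n ∈ subgroupPow H n :=
  Subgroup.subset_closure ⟨x, hx, rfl⟩

theorem subgroupPow_le {G : Type*} [Group G] (H : Subgroup G) (n : ℕ) : subgroupPow H n ≤ H := by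
  rw [subgroupPow, Subgroup.closure_le]
  rintro _ ⟨h, hh, rfl⟩
  exact H.pow_mem hh n

theorem subgroupPow_mono {G : Type*} [Group G] {H K : Subgroup G} (h : H ≤ K) (n : ℕ) :
    subgroupPow H n ≤ subgroupPow K n := by
  rw [subgroupPow, Subgroup.closure_le]
  rintro _ ⟨x, hx, rfl⟩
  exact pow_mem_subgroupPow (h hx) n

theorem subgroupPow_normal {G : Type*} [Group G] (H : Subgroup G) (hH : H.Normal) (n : ℕ) :
    (subgroupPow H n).Normal := by
  constructor
  intro x hx g
  induction hx using Subgroup.closure_induction with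
  | mem x hx =>
    obtain ⟨h, hh, rfl⟩ := hx
    rw [← conj_pow]
    exact pow_mem_subgroupPow (hH.conj_mem h hh g) n
  | one => simp
  | mul x y _ _ h1 h2 => simpa [mul_assoc] using mul_mem h1 h2
  | inv x _ h => simpa [mul_assoc] using inv_mem h

/-- Centrality of `g` modulo a normal subgroup `S` can be tested on generators. -/
theorem closure_commutator_mem {G : Type*} [Group G] {s : Set G} {S : Subgroup G} (hS : S.Normal)
    {g : G} (h : ∀ x ∈ s, ⁅x, g⁆ ∈ S) : ∀ x ∈ Subgroup.closure s, ⁅x, g⁆ ∈ S := by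
  intro x hx
  induction hx using Subgroup.closure_induction with
  | mem x hx => exact h x hx
  | one => simp
  | mul x y _ _ h1 h2 =>
    have e : ⁅x * y, g⁆ = x * ⁅y, g⁆ * x⁻¹ * ⁅x, g⁆ := by
      simp only [commutatorElement_def]; group
    rw [e]
    exact mul_mem (hS.conj_mem _ h2 x) h1
  | inv x _ h =>
    have e : ⁅x⁻¹, g⁆ = x⁻¹ * ⁅x, g⁆⁻¹ * x⁻¹⁻¹ := by
      simp only [commutatorElement_def]; group
    rw [e]
    exact hS.conj_mem _ (inv_mem h) _

/-- In a nilpotent group a subgroup `R` that lies in `P [R, G]` lies in `P`. -/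
theorem le_of_le_sup_commutator {G : Type*} [Group G] [Group.IsNilpotent G] {P R : Subgroup G}
    (hP : P.Normal) (hR : R ≤ P ⊔ ⁅R, (⊤ : Subgroup G)⁆) : R ≤ P := by
  have key : ∀ n, R ≤ P ⊔ (⊤ : Subgroup G).lowerCentralSeries n := by
    intro n
    induction n with
    | zero => simp
    | succ n ih =>
      refine hR.trans (sup_le le_sup_left ?_)
      rw [Subgroup.commutator_le]
      intro a ha g _
      have ha' := ih ha
      rw [Subgroup.sup_eq_closure] at ha'
      refine closure_commutator_mem inferInstance ?_ a ha'
      rintro x (hx | hx)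
      · exact Subgroup.mem_sup_left
          (Subgroup.commutator_le_left P ⊤ (Subgroup.commutator_mem_commutator hx trivial))
      · exact Subgroup.mem_sup_right (Subgroup.commutator_mem_commutator hx trivial)
  obtain ⟨n, hn⟩ := Subgroup.nilpotent_iff_lowerCentralSeries.mp ‹_›
  simpa [hn] using key n

/-- If `[N, G] ≤ N^p` then `[N^p, G] ≤ (N^p)^p`. It suffices to prove this modulo `[[N^p, G], G]`,
where `commutator_pow_prime_mem` applies. -/
theorem commutator_subgroupPow_mem {G : Type*} [Group G] [Group.IsNilpotent G] {p : ℕ}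
    (hp : p.Prime) (hp2 : p ≠ 2) (N : Subgroup G) (hN : N.Normal)
    (h : ∀ x ∈ N, ∀ g, ⁅x, g⁆ ∈ subgroupPow N p) :
    ∀ x ∈ subgroupPow N p, ∀ g, ⁅x, g⁆ ∈ subgroupPow (subgroupPow N p) p := by
  set M := subgroupPow N p with hM
  have hMn : M.Normal := subgroupPow_normal N hN p
  have hPn : (subgroupPow M p).Normal := subgroupPow_normal M hMn p
  have hle : ⁅M, (⊤ : Subgroup G)⁆ ≤ subgroupPow M p := by
    apply le_of_le_sup_commutator hPn
    rw [Subgroup.commutator_le]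
    intro a ha g _
    refine closure_commutator_mem inferInstance ?_ a ha
    rintro _ ⟨x, hx, rfl⟩
    have hd : ⁅⁅x, g⁆, x⁆ ∈ ⁅M, (⊤ : Subgroup G)⁆ :=
      Subgroup.commutator_mem_commutator (h x hx g) trivial
    apply commutator_pow_prime_mem hp hp2 _ inferInstance
    · exact Subgroup.mem_sup_left (pow_mem_subgroupPow (h x hx g) p)
    · exact Subgroup.mem_sup_right (Subgroup.commutator_mem_commutator hd trivial)
    · exact Subgroup.mem_sup_right (Subgroup.commutator_mem_commutator hd trivial)
  intro x hx g
  exact hle (Subgroup.commutator_mem_commutator hx trivial)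

/-- A nontrivial finite `p`-group has a proper subgroup (of index `p`) containing all `p`-th powers. -/
theorem exists_lt_top_pow_mem {N : Type*} [Group N] [Finite N] [Nontrivial N] {p : ℕ}
    (hp : p.Prime) (hN : IsPGroup p N) : ∃ K : Subgroup N, K ≠ ⊤ ∧ ∀ x : N, x ^ p ∈ K := by
  have := Fact.mk hp
  obtain ⟨n, hn⟩ := IsPGroup.iff_card.mp hN
  have hn0 : n ≠ 0 := by
    rintro rfl
    rw [pow_zero] at hn
    exact (Finite.one_lt_card (α := N)).ne' hn
  obtain ⟨m, rfl⟩ := Nat.exists_eq_succ_of_ne_zero hn0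
  obtain ⟨K, hK⟩ := Sylow.exists_subgroup_card_pow_prime (G := N) p (n := m)
    (hn ▸ pow_dvd_pow p (Nat.le_succ m))
  have hidx : K.index = p := by
    have := K.card_mul_index
    rw [hK, hn, pow_succ] at this
    exact Nat.eq_of_mul_eq_mul_left (pow_pos hp.pos m) this
  have hKn : K.Normal := by
    apply Subgroup.normal_of_index_eq_minFac_card
    rw [hidx, hn, hp.pow_minFac (Nat.succ_ne_zero m)]
  refine ⟨K, ?_, fun x => ?_⟩
  · rintro rfl
    rw [Subgroup.index_top] at hidx
    exact hp.one_lt.ne hidx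
  · rw [← hidx]; exact K.pow_index_mem x

theorem subgroupPow_lt {G : Type*} [Group G] [Finite G] {p : ℕ} (hp : p.Prime)
    (hG : IsPGroup p G) {N : Subgroup G} (hN : N ≠ ⊥) : subgroupPow N p < N := by
  refine lt_of_le_of_ne (subgroupPow_le N p) fun heq => ?_
  have : Nontrivial N := (Subgroup.nontrivial_iff_ne_bot N).mpr hN
  obtain ⟨K, hK, hKp⟩ := exists_lt_top_pow_mem hp (hG.to_subgroup N)
  apply hK
  have h1 : N ≤ K.map N.subtype := by
    conv_lhs => rw [← heq]
    rw [subgroupPow, Subgroup.closure_le]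
    rintro _ ⟨x, hx, rfl⟩
    exact ⟨(⟨x, hx⟩ : N) ^ p, hKp _, rfl⟩
  rw [eq_top_iff]
  rintro ⟨x, hx⟩ _
  obtain ⟨y, hy, hyx⟩ := h1 hx
  have : y = ⟨x, hx⟩ := Subtype.ext hyx
  exact this ▸ hy

/-- The properties of the series `G ≥ G^p ≥ (G^p)^p ≥ ⋯` of a powerful `p`-group that are used below:
a descending central series ending in `1`, whose successive terms are related by the `p`-th power
map, with every element of `F (k + 1)` being an honest `p`-th power of an element of `F k`. -/
structure IsPowFiltration (p : ℕ) {G : Type*} [Group G] (F : ℕ → Subgroup G) : Prop where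
  zero : F 0 = ⊤
  normal : ∀ k, (F k).Normal
  anti : Antitone F
  comm : ∀ k, ∀ a ∈ F k, ∀ g, ⁅a, g⁆ ∈ F (k + 1)
  pow : ∀ k, ∀ a ∈ F k, a ^ p ∈ F (k + 1)
  root : ∀ k, ∀ a ∈ F (k + 1), ∃ x ∈ F k, x ^ p = a
  bot : ∃ m, F m = ⊥

/-- The iterated power subgroups: `powSeries p G (k + 1) = (powSeries p G k)^p`, starting from `G`. -/
def powSeries (p : ℕ) (G : Type*) [Group G] : ℕ → Subgroup G
  | 0 => ⊤
  | k + 1 => subgroupPow (powSeries p G k) p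

theorem isPowFiltration_powSeries {p : ℕ} (hp : p.Prime) (hp2 : p ≠ 2) (G : Type*) [Group G]
    [Finite G] (hG : IsPGroup p G) (hpow : IsPowerful p G) :
    IsPowFiltration p (powSeries p G) := by
  have := Fact.mk hp
  have : Group.IsNilpotent G := hG.isNilpotent
  rw [IsPowerful, if_neg hp2] at hpow
  have hnorm : ∀ k, (powSeries p G k).Normal := by
    intro k
    induction k with
    | zero => exact inferInstanceAs (⊤ : Subgroup G).Normal
    | succ k ih => exact subgroupPow_normal _ ih p
  have hanti : Antitone (powSeries p G) := antitone_nat_of_succ_le fun k => subgroupPow_le _ p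
  have hcomm : ∀ k, ∀ a ∈ powSeries p G k, ∀ g, ⁅a, g⁆ ∈ powSeries p G (k + 1) := by
    intro k
    induction k with
    | zero =>
      intro a _ g
      exact hpow (Subgroup.commutator_mem_commutator trivial trivial)
    | succ k ih => exact commutator_subgroupPow_mem hp hp2 _ (hnorm k) ih
  have hpw : ∀ k, ∀ a ∈ powSeries p G k, a ^ p ∈ powSeries p G (k + 1) :=
    fun k a ha => pow_mem_subgroupPow ha p
  have hbot : ∃ m, powSeries p G m = ⊥ := by
    by_contra! hne
    have hlt : ∀ m, Nat.card (powSeries p G m) + m ≤ Nat.card G := by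
      intro m
      induction m with
      | zero => simpa using Subgroup.card_le_card_group _
      | succ m ih =>
        have : Nat.card (subgroupPow (powSeries p G m) p) < Nat.card (powSeries p G m) :=
          Set.Finite.card_lt_card (Set.toFinite _) (subgroupPow_lt hp hG (hne m))
        change Nat.card (subgroupPow (powSeries p G m) p) + _ ≤ _
        omega
    have h1 := hlt (Nat.card G)
    have h2 : 0 < Nat.card (powSeries p G (Nat.card G)) := Nat.card_pos
    omega
  -- `(a * b) ^ p ≡ a ^ p * b ^ p` modulo `powSeries (k + 2)` for `b ∈ powSeries k` and any `a`
  have hmul : ∀ k a b, b ∈ powSeries p G k →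
      (a ^ p * b ^ p)⁻¹ * (a * b) ^ p ∈ powSeries p G (k + 2) := by
    intro k a b hb
    have hd := hcomm k b hb a
    exact mul_pow_prime_mem hp hp2 _ (hnorm _) (hcomm _ _ hd _) (hcomm _ _ hd _) (hpw _ _ hd)
  -- by `hmul`, products of `p`-th powers are `p`-th powers up to an error two steps down;
  -- `hroot` pushes this error down the series until it vanishes
  have happrox : ∀ k, ∀ a ∈ powSeries p G (k + 1), ∃ z ∈ powSeries p G k,
      (z ^ p)⁻¹ * a ∈ powSeries p G (k + 2) := by
    intro k a ha
    have hn := hnorm (k + 2)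
    induction ha using Subgroup.closure_induction with
    | mem x hx =>
      obtain ⟨h, hh, rfl⟩ := hx
      exact ⟨h, hh, by simp⟩
    | one => exact ⟨1, one_mem _, by simp⟩
    | mul x y _ _ h1 h2 =>
      obtain ⟨z, hz, hzx⟩ := h1
      obtain ⟨w, hw, hwy⟩ := h2
      refine ⟨z * w, mul_mem hz hw, ?_⟩
      have h3 := hmul k z w hw
      rw [← QuotientGroup.eq] at *
      rw [← h3, QuotientGroup.mk_mul, hzx, hwy, QuotientGroup.mk_mul]
    | inv x _ h1 =>
      obtain ⟨z, hz, hzx⟩ := h1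
      refine ⟨z⁻¹, inv_mem hz, ?_⟩
      rw [← QuotientGroup.eq] at *
      rw [inv_pow, QuotientGroup.mk_inv, hzx, QuotientGroup.mk_inv]
  have hroot : ∀ k, ∀ a ∈ powSeries p G (k + 1), ∃ x ∈ powSeries p G k, x ^ p = a := by
    intro k a ha
    have key : ∀ j, ∃ x ∈ powSeries p G k, (x ^ p)⁻¹ * a ∈ powSeries p G (k + 1 + j) := by
      intro j
      induction j with
      | zero => exact ⟨1, one_mem _, by simpa using ha⟩
      | succ j ih =>
        obtain ⟨x, hx, hxa⟩ := ih
        rw [show k + 1 + j = (k + j) + 1 by ring] at hxa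
        obtain ⟨z, hz, hza⟩ := happrox (k + j) _ hxa
        refine ⟨x * z, mul_mem hx (hanti (Nat.le_add_right k j) hz), ?_⟩
        have h3 := hmul (k + j) x z hz
        rw [show k + 1 + (j + 1) = k + j + 2 by ring]
        have hn := hnorm (k + j + 2)
        rw [← QuotientGroup.eq] at hza h3 ⊢
        rw [← h3, QuotientGroup.mk_mul, hza, ← QuotientGroup.mk_mul, mul_inv_cancel_left]
    obtain ⟨m, hm⟩ := hbot
    obtain ⟨x, hx, hxa⟩ := key m
    refine ⟨x, hx, ?_⟩
    have h0 : (x ^ p)⁻¹ * a ∈ (⊥ : Subgroup G) := hm ▸ hanti (Nat.le_add_left m (k + 1)) hxa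
    rw [Subgroup.mem_bot] at h0
    exact inv_mul_eq_one.mp h0
  exact ⟨rfl, hnorm, hanti, hcomm, hpw, hroot, hbot⟩

/-! ### Orders of commutators when the subgroups `⟨u⟩ F 1` are omega-closed -/

/-- The elements of `H` of order dividing `p ^ n` are closed under multiplication, for each `n`. -/
def IsOmegaClosed (p : ℕ) {G : Type*} [Group G] (H : Subgroup G) : Prop :=
  ∀ n : ℕ, ∀ x ∈ H, ∀ y ∈ H, x ^ p ^ n = 1 → y ^ p ^ n = 1 → (x * y) ^ p ^ n = 1

theorem pow_prime_pow_mono {G : Type*} [Group G] {p m n : ℕ} (h : m ≤ n) {x : G}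
    (hx : x ^ p ^ m = 1) : x ^ p ^ n = 1 := by
  obtain ⟨k, rfl⟩ := Nat.exists_eq_add_of_le h
  rw [pow_add, pow_mul, hx, one_pow]

namespace IsPowFiltration

variable {p : ℕ} {G : Type*} [Group G] {F : ℕ → Subgroup G}

theorem comm_mem_one (hfil : IsPowFiltration p F) (a g : G) : ⁅a, g⁆ ∈ F 1 :=
  hfil.comm 0 a (hfil.zero ▸ trivial) g

theorem conj_mem_sup (hfil : IsPowFiltration p F) (u g : G) :
    g * u * g⁻¹ ∈ Subgroup.zpowers u ⊔ F 1 := by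
  have e : g * u * g⁻¹ = ⁅g, u⁆ * u := by rw [commutatorElement_def]; group
  rw [e]
  exact mul_mem (Subgroup.mem_sup_right (hfil.comm_mem_one g u))
    (Subgroup.mem_sup_left (Subgroup.mem_zpowers u))

/-- As `[u, g] = u * (g * u * g⁻¹)⁻¹` is a product of two elements of `⟨u⟩ F 1`,
its order is controlled by that of `u` alone. -/
theorem free_left (hfil : IsPowFiltration p F)
    (hF : ∀ u, IsOmegaClosed p (Subgroup.zpowers u ⊔ F 1)) {n : ℕ} {u : G} (hu : u ^ p ^ n = 1)
    (g : G) : ⁅u, g⁆ ^ p ^ n = 1 := by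
  have e : ⁅u, g⁆ = u * (g * u * g⁻¹)⁻¹ := by rw [commutatorElement_def]; group
  rw [e]
  refine hF u n _ (Subgroup.mem_sup_left (Subgroup.mem_zpowers u)) _
    (inv_mem (hfil.conj_mem_sup u g)) hu ?_
  rw [inv_pow, conj_pow, hu]; simp

theorem free_right (hfil : IsPowFiltration p F)
    (hF : ∀ u, IsOmegaClosed p (Subgroup.zpowers u ⊔ F 1)) {n : ℕ} {u : G} (hu : u ^ p ^ n = 1)
    (g : G) : ⁅g, u⁆ ^ p ^ n = 1 := by
  rw [← commutatorElement_inv, inv_pow, hfil.free_left hF hu, inv_one]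

/-- The elements of `F 1` of order dividing `p ^ n` form a normal subgroup of `G`. -/
theorem exists_omega (hfil : IsPowFiltration p F)
    (hF : ∀ u, IsOmegaClosed p (Subgroup.zpowers u ⊔ F 1)) (n : ℕ) :
    ∃ M : Subgroup G, M.Normal ∧ ∀ x, x ∈ M ↔ x ∈ F 1 ∧ x ^ p ^ n = 1 := by
  refine ⟨{ carrier := {x | x ∈ F 1 ∧ x ^ p ^ n = 1}
            one_mem' := ⟨one_mem _, one_pow _⟩
            mul_mem' := fun {x y} hx hy => ⟨mul_mem hx.1 hy.1,
              hF 1 n x (Subgroup.mem_sup_right hx.1) y (Subgroup.mem_sup_right hy.1) hx.2 hy.2⟩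
            inv_mem' := fun {x} hx => ⟨inv_mem hx.1, by rw [inv_pow, hx.2, inv_one]⟩ },
    ⟨fun x hx g => ⟨(hfil.normal 1).conj_mem x hx.1 g, by rw [conj_pow, hx.2]; simp⟩⟩,
    fun x => Iff.rfl⟩

/-- `commutator_pow_prime_mem` for `M` the subgroup of elements of `F 1` of order dividing `p ^ n`. -/
theorem step (hp : p.Prime) (hp2 : p ≠ 2) (hfil : IsPowFiltration p F)
    (hF : ∀ u, IsOmegaClosed p (Subgroup.zpowers u ⊔ F 1)) {n : ℕ} {x u : G}
    (hc : ⁅x, u⁆ ^ p ^ (n + 1) = 1) (hx : ⁅⁅⁅x, u⁆, x⁆, x⁆ ^ p ^ n = 1)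
    (hdc : ⁅⁅⁅x, u⁆, x⁆, ⁅x, u⁆⁆ ^ p ^ n = 1) : ⁅x ^ p, u⁆ ^ p ^ n = 1 := by
  obtain ⟨M, hM, hmem⟩ := hfil.exists_omega hF n
  refine ((hmem _).mp (commutator_pow_prime_mem hp hp2 M hM ?_ ?_ ?_)).2
  · exact (hmem _).mpr ⟨pow_mem (hfil.comm_mem_one x u) p, by rw [← pow_mul, ← pow_succ', hc]⟩
  · exact (hmem _).mpr ⟨hfil.comm_mem_one _ _, hx⟩
  · exact (hmem _).mpr ⟨hfil.comm_mem_one _ _, hdc⟩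

/-- The downward induction along the series `F`, starting where `F m` is trivial. -/
theorem comm_two_of_comm_one (hp : p.Prime) (hp2 : p ≠ 2) (hfil : IsPowFiltration p F)
    (hF : ∀ u, IsOmegaClosed p (Subgroup.zpowers u ⊔ F 1)) {n : ℕ}
    (hX : ∀ t ∈ F 1, ∀ u : G, t ^ p ^ (n + 2) = 1 → u ^ p ^ (n + 2) = 1 → ⁅t, u⁆ ^ p ^ (n + 1) = 1) :
    ∀ t ∈ F 2, ∀ u : G, t ^ p ^ (n + 1) = 1 → u ^ p ^ (n + 2) = 1 → ⁅t, u⁆ ^ p ^ n = 1 := by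
  obtain ⟨m, hm⟩ := hfil.bot
  suffices h : ∀ j k, m ≤ k + j → ∀ t ∈ F (k + 2), ∀ u : G, t ^ p ^ (n + 1) = 1 →
      u ^ p ^ (n + 2) = 1 → ⁅t, u⁆ ^ p ^ n = 1 from h m 0 (by omega)
  intro j
  induction j with
  | zero =>
    intro k hk t ht u _ _
    have ht1 : t ∈ F m := hfil.anti (by omega) ht
    rw [hm, Subgroup.mem_bot] at ht1
    simp [ht1]
  | succ j ih =>
    intro k hk t ht u htn hu
    obtain ⟨x, hx, rfl⟩ := hfil.root _ t ht
    have hxn : x ^ p ^ (n + 2) = 1 := by rw [pow_succ', pow_mul]; exact htn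
    have hc := hX x (hfil.anti (by omega) hx) u hxn hu
    have hd : ⁅⁅x, u⁆, x⁆ ∈ F (k + 1 + 2) := hfil.comm _ _ (hfil.comm _ _ hx u) x
    have hdn := hfil.free_left hF hc x
    exact hfil.step hp hp2 hF hc (ih (k + 1) (by omega) _ hd _ hdn hxn)
      (ih (k + 1) (by omega) _ hd _ hdn (pow_prime_pow_mono (by omega) hc))

/-- Downward induction on `n`, starting from the exponent `p ^ E` of `G`; the step passes through
`comm_two_of_comm_one`. -/
theorem comm_one (hp : p.Prime) (hp2 : p ≠ 2) (hfil : IsPowFiltration p F)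
    (hF : ∀ u, IsOmegaClosed p (Subgroup.zpowers u ⊔ F 1)) {E : ℕ} (hE : ∀ g : G, g ^ p ^ E = 1)
    (n : ℕ) : ∀ t ∈ F 1, ∀ u : G, t ^ p ^ (n + 1) = 1 → u ^ p ^ (n + 1) = 1 →
      ⁅t, u⁆ ^ p ^ n = 1 := by
  suffices h : ∀ j n, E ≤ n + j → ∀ t ∈ F 1, ∀ u : G, t ^ p ^ (n + 1) = 1 → u ^ p ^ (n + 1) = 1 →
      ⁅t, u⁆ ^ p ^ n = 1 from h E n (by omega)
  intro j
  induction j with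
  | zero => intro n hn t _ u _ _; exact pow_prime_pow_mono hn (hE _)
  | succ j ih =>
    intro n hn t ht u htn hu
    have hB := hfil.comm_two_of_comm_one hp hp2 hF (n := n) (ih (n + 1) (by omega))
    obtain ⟨x, hx, rfl⟩ := hfil.root _ t ht
    have hxn : x ^ p ^ (n + 2) = 1 := by rw [pow_succ', pow_mul]; exact htn
    have hc : ⁅x, u⁆ ^ p ^ (n + 1) = 1 := hfil.free_right hF hu x
    have hd : ⁅⁅x, u⁆, x⁆ ∈ F 2 := hfil.comm _ _ (hfil.comm _ _ hx u) x
    have hdn := hfil.free_left hF hc x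
    exact hfil.step hp hp2 hF hc (hB _ hd _ hdn hxn)
      (hB _ hd _ hdn (pow_prime_pow_mono (by omega) hc))

theorem comm_two (hp : p.Prime) (hp2 : p ≠ 2) (hfil : IsPowFiltration p F)
    (hF : ∀ u, IsOmegaClosed p (Subgroup.zpowers u ⊔ F 1)) {E : ℕ} (hE : ∀ g : G, g ^ p ^ E = 1)
    (n : ℕ) : ∀ t ∈ F 2, ∀ u : G, t ^ p ^ (n + 1) = 1 → u ^ p ^ (n + 2) = 1 →
      ⁅t, u⁆ ^ p ^ n = 1 :=
  hfil.comm_two_of_comm_one hp hp2 hF (hfil.comm_one hp hp2 hF hE (n + 1))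

theorem comm_three (hp : p.Prime) (hp2 : p ≠ 2) (hfil : IsPowFiltration p F)
    (hF : ∀ u, IsOmegaClosed p (Subgroup.zpowers u ⊔ F 1)) {E : ℕ} (hE : ∀ g : G, g ^ p ^ E = 1)
    (n : ℕ) : ∀ t ∈ F 3, ∀ u : G, t ^ p ^ (n + 1) = 1 → u ^ p ^ (n + 3) = 1 →
      ⁅t, u⁆ ^ p ^ n = 1 := by
  intro t ht u htn hu
  obtain ⟨x, hx, rfl⟩ := hfil.root _ t ht
  have hxn : x ^ p ^ (n + 2) = 1 := by rw [pow_succ', pow_mul]; exact htn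
  have hc := hfil.comm_two hp hp2 hF hE (n + 1) x hx u hxn hu
  have hd : ⁅⁅x, u⁆, x⁆ ∈ F 2 :=
    hfil.anti (by omega) (hfil.comm _ _ (hfil.comm _ _ hx u) x)
  have hdn := hfil.free_left hF hc x
  have hB := hfil.comm_two hp hp2 hF hE n
  exact hfil.step hp hp2 hF hc (hB _ hd _ hdn hxn)
    (hB _ hd _ hdn (pow_prime_pow_mono (by omega) hc))

theorem isOmegaClosed_top (hp : p.Prime) (hp2 : p ≠ 2) (hfil : IsPowFiltration p F)
    (hF : ∀ u, IsOmegaClosed p (Subgroup.zpowers u ⊔ F 1)) {E : ℕ} (hE : ∀ g : G, g ^ p ^ E = 1) :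
    IsOmegaClosed p (⊤ : Subgroup G) := by
  intro n
  induction n with
  | zero =>
    intro x _ y _ hx hy
    simp_all
  | succ n ih =>
    intro x _ y _ hx hy
    obtain ⟨M, hM, hmem⟩ := hfil.exists_omega hF n
    have hd := hfil.free_left hF hy x
    have hX := hfil.comm_one hp hp2 hF hE n _ (hfil.comm_mem_one y x)
    have hm : (x ^ p * y ^ p)⁻¹ * (x * y) ^ p ∈ M := by
      refine mul_pow_prime_mem hp hp2 M hM ?_ ?_ ?_
      · exact (hmem _).mpr ⟨hfil.comm_mem_one _ _, hX x hd hx⟩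
      · exact (hmem _).mpr ⟨hfil.comm_mem_one _ _, hX y hd hy⟩
      · exact (hmem _).mpr
          ⟨pow_mem (hfil.comm_mem_one y x) p, by rw [← pow_mul, ← pow_succ', hd]⟩
    have e : (x * y) ^ p = x ^ p * y ^ p * ((x ^ p * y ^ p)⁻¹ * (x * y) ^ p) := by group
    rw [pow_succ', pow_mul] at hx hy ⊢
    rw [e]
    exact ih _ trivial _ trivial (ih _ trivial _ trivial hx hy) ((hmem _).mp hm).2

end IsPowFiltration

/-! ### Powerful `p`-groups are omega-closed -/

theorem exists_pow_prime_pow_eq_one {G : Type*} [Group G] [Finite G] {p : ℕ} (hp : p.Prime)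
    (hG : IsPGroup p G) : ∃ E, ∀ g : G, g ^ p ^ E = 1 := by
  have := Fact.mk hp
  obtain ⟨E, hE⟩ := IsPGroup.iff_card.mp hG
  exact ⟨E, fun g => hE ▸ pow_card_eq_one'⟩

namespace IsPowFiltration

variable {p : ℕ} {G : Type*} [Group G] {F : ℕ → Subgroup G}

/-- `⟨u⟩ F k` is abelian modulo `F (k + 1)`, since `F k` is central there. -/
theorem comm_zpowers_sup (hfil : IsPowFiltration p F) {u : G} (k : ℕ) :
    ∀ a ∈ Subgroup.zpowers u ⊔ F k, ∀ b ∈ Subgroup.zpowers u ⊔ F k, ⁅a, b⁆ ∈ F (k + 1) := by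
  have hn := hfil.normal (k + 1)
  have key : ∀ b, ⁅u, b⁆ ∈ F (k + 1) → ∀ a ∈ Subgroup.zpowers u ⊔ F k, ⁅a, b⁆ ∈ F (k + 1) := by
    intro b hb a ha
    rw [Subgroup.zpowers_eq_closure, ← Subgroup.closure_eq (F k), ← Subgroup.closure_union] at ha
    refine closure_commutator_mem hn ?_ a ha
    rintro x (hx | hx)
    · rw [Set.mem_singleton_iff.mp hx]; exact hb
    · exact hfil.comm k x hx b
  intro a ha b hb
  refine key b ?_ a ha
  rw [← commutatorElement_inv]
  exact inv_mem (key u (by simp) b hb)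

/-- If `G` is cyclic modulo `F 1`, then `G = ⟨u⟩ F k` for every `k ≥ 1`, so `G` is abelian. -/
theorem commute_of_zpowers_sup_eq_top (hp : p.Prime) (hp2 : p ≠ 2) (hfil : IsPowFiltration p F)
    {u : G} (hu : Subgroup.zpowers u ⊔ F 1 = ⊤) (a b : G) : Commute a b := by
  have key : ∀ k, Subgroup.zpowers u ⊔ F (k + 1) = ⊤ := by
    intro k
    induction k with
    | zero => exact hu
    | succ k ih =>
      rw [← hu]
      refine le_antisymm (sup_le_sup_left (hfil.anti (by omega)) _) (sup_le le_sup_left ?_)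
      intro f hf
      obtain ⟨x, _, rfl⟩ := hfil.root 0 f hf
      have hn := hfil.normal (k + 1)
      obtain ⟨v, hv, y, hy, rfl⟩ : ∃ v ∈ Subgroup.zpowers u, ∃ y ∈ F (k + 1), v * y = x := by
        rw [← Subgroup.mem_sup_of_normal_right, ih]; trivial
      have hd := hfil.comm _ y hy v
      have hm := mul_pow_prime_mem hp hp2 (F (k + 2)) (hfil.normal _) (a := v) (b := y)
        (hfil.anti (by omega) (hfil.comm _ _ hd _)) (hfil.anti (by omega) (hfil.comm _ _ hd _))
        (hfil.anti (by omega) (hfil.pow _ _ hd))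
      -- an element of `F 1` is `(v * y) ^ p` with `v ∈ ⟨u⟩`, `y ∈ F (k + 1)`, and it is congruent to
      -- `v ^ p` modulo `F (k + 2)`
      have e : (v * y) ^ p = v ^ p * (y ^ p * ((v ^ p * y ^ p)⁻¹ * (v * y) ^ p)) := by group
      rw [e]
      exact mul_mem (Subgroup.mem_sup_left (pow_mem hv p))
        (Subgroup.mem_sup_right (mul_mem (hfil.pow _ _ hy) hm))
  obtain ⟨m, hm⟩ := hfil.bot
  have h := hfil.comm_zpowers_sup (m + 1) a (key m ▸ Subgroup.mem_top a) b
    (key m ▸ Subgroup.mem_top b)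
  have hone := hfil.anti (by omega : m ≤ m + 2) h
  rw [hm, Subgroup.mem_bot] at hone
  exact commutatorElement_eq_one_iff_commute.mp hone

theorem isPowerful_zpowers_sup (hp2 : p ≠ 2) (hfil : IsPowFiltration p F) (u : G) :
    IsPowerful p ↥(Subgroup.zpowers u ⊔ F 1) := by
  rw [IsPowerful, if_neg hp2, commutator_def, Subgroup.commutator_le]
  rintro ⟨a, ha⟩ _ ⟨b, hb⟩ _
  obtain ⟨x, hx, hxab⟩ := hfil.root 1 _ (hfil.comm_zpowers_sup 1 a ha b hb)
  have e : ⁅(⟨a, ha⟩ : ↥(Subgroup.zpowers u ⊔ F 1)), ⟨b, hb⟩⁆ =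
      (⟨x, Subgroup.mem_sup_right hx⟩ : ↥(Subgroup.zpowers u ⊔ F 1)) ^ p := Subtype.ext hxab.symm
  rw [e]
  exact pow_mem_subgroupPow (Subgroup.mem_top _) p

end IsPowFiltration

universe u

/-- The induction on the order of the group. -/
theorem isOmegaClosed_of_card {p : ℕ} (hp : p.Prime) (hp2 : p ≠ 2) (N : ℕ) :
    ∀ (G : Type u) [Group G] [Finite G], Nat.card G = N → IsPGroup p G → IsPowerful p G →
      ∀ H : Subgroup G, IsOmegaClosed p H := by
  induction N using Nat.strong_induction_on with
  | _ N ih =>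
    intro G _ _ hN hG hpow H
    have hfil := isPowFiltration_powSeries hp hp2 G hG hpow
    suffices h : IsOmegaClosed p (⊤ : Subgroup G) from
      fun n x _ y _ hx hy => h n x trivial y trivial hx hy
    by_cases htop : ∃ u, Subgroup.zpowers u ⊔ powSeries p G 1 = ⊤
    · obtain ⟨u, hu⟩ := htop
      intro n x _ y _ hx hy
      rw [(hfil.commute_of_zpowers_sup_eq_top hp hp2 hu x y).mul_pow, hx, hy, one_mul]
    · obtain ⟨E, hE⟩ := exists_pow_prime_pow_eq_one hp hG
      refine hfil.isOmegaClosed_top hp hp2 (fun u => ?_) hE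
      intro n x hx y hy hxn hyn
      have hlt : Nat.card ↥(Subgroup.zpowers u ⊔ powSeries p G 1) < N := by
        rw [← hN]
        refine lt_of_le_of_ne (Subgroup.card_le_card_group _) fun h => htop ⟨u, ?_⟩
        exact Subgroup.eq_top_of_card_eq _ h
      have := ih _ hlt _ rfl (hG.to_subgroup _) (hfil.isPowerful_zpowers_sup hp2 u) ⊤ n
        ⟨x, hx⟩ trivial ⟨y, hy⟩ trivial (Subtype.ext hxn) (Subtype.ext hyn)
      exact congrArg Subtype.val this

/-- In a finite powerful `p`-group, `p` odd, the elements of order dividing `p ^ n` form a subgroup. -/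
theorem IsPowerful.isOmegaClosed {p : ℕ} (hp : p.Prime) (hp2 : p ≠ 2) {G : Type*} [Group G]
    [Finite G] (hG : IsPGroup p G) (hpow : IsPowerful p G) (H : Subgroup G) : IsOmegaClosed p H :=
  isOmegaClosed_of_card hp hp2 _ G rfl hG hpow H

/-! ### The powerfully central chain on `Ω_i(G^p)` -/

namespace IsPowFiltration

variable {p : ℕ} {G : Type*} [Group G] {F : ℕ → Subgroup G}

theorem comm_mem_add_two (hp : p.Prime) (hp2 : p ≠ 2) (hfil : IsPowFiltration p F) {j : ℕ} {a b : G}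
    (ha : a ∈ F j) (hb : b ∈ F 1) : ⁅a, b⁆ ∈ F (j + 2) := by
  obtain ⟨y, _, rfl⟩ := hfil.root 0 b hb
  rw [← commutatorElement_inv]
  have hc : ⁅y, a⁆ ∈ F (j + 1) := by
    rw [← commutatorElement_inv]
    exact inv_mem (hfil.comm j a ha y)
  have hd := hfil.comm _ _ hc y
  exact inv_mem (commutator_pow_prime_mem hp hp2 _ (hfil.normal _) (hfil.pow _ _ hc)
    (hfil.anti (by omega) (hfil.comm _ _ hd y)) (hfil.anti (by omega) (hfil.comm _ _ hd _)))

theorem exists_pow_eq (hfil : IsPowFiltration p F) (j : ℕ) :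
    ∀ a ∈ F j, ∃ x : G, x ^ p ^ j = a := by
  induction j with
  | zero => exact fun a _ => ⟨a, by simp⟩
  | succ j ih =>
    intro a ha
    obtain ⟨y, hy, rfl⟩ := hfil.root j a ha
    obtain ⟨x, rfl⟩ := ih y hy
    exact ⟨x, by rw [pow_succ, pow_mul]⟩

/-- Replacing `x` by `x ^ p` lowers the exponent of its commutator with `b` by one, down to
`[x ^ p ^ i, b] = 1`. -/
theorem comm_pow_pow (hp : p.Prime) (hp2 : p ≠ 2) (hfil : IsPowFiltration p F)
    (hF : ∀ u, IsOmegaClosed p (Subgroup.zpowers u ⊔ F 1)) {E : ℕ} (hE : ∀ g : G, g ^ p ^ E = 1)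
    {i : ℕ} {x b : G} (hx : x ^ p ^ (i + 2) = 1) (hb : b ∈ F 1) (hbi : b ^ p ^ i = 1) (j : ℕ)
    (hj : j ≤ i) : ⁅x ^ p ^ j, b⁆ ^ p ^ (i - j) = 1 := by
  induction j with
  | zero => exact hfil.free_right hF hbi _
  | succ j ih =>
    obtain ⟨n, rfl⟩ : ∃ n, i = j + 1 + n := Nat.exists_eq_add_of_le hj
    have hc := ih (by omega)
    rw [show j + 1 + n - j = n + 1 by omega] at hc
    rw [show j + 1 + n - (j + 1) = n by omega, pow_succ, pow_mul]
    have hy : (x ^ p ^ j) ^ p ^ (n + 3) = 1 := by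
      rw [← pow_mul, ← pow_add, ← hx]; congr 2; omega
    generalize x ^ p ^ j = y at hc hy ⊢
    have hc2 : ⁅y, b⁆ ∈ F 2 := hfil.comm_mem_add_two hp hp2 (hfil.zero ▸ Subgroup.mem_top y) hb
    have hd : ⁅⁅y, b⁆, y⁆ ∈ F 3 := hfil.comm _ _ hc2 y
    have hdn := hfil.free_left hF hc y
    have hC := hfil.comm_three hp hp2 hF hE n _ hd
    exact hfil.step hp hp2 hF hc (hC _ hdn hy) (hC _ hdn (pow_prime_pow_mono (by omega) hc))

/-- The powerfully central chain of length `i` on `K = Ω_i(F 1)`: its `k`-th term, `k ≥ 1`, consists of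
the elements of `K` in `F (i + 1 - k)` of order dividing `p ^ (k + 1)`. -/
theorem exists_chain (hp : p.Prime) (hp2 : p ≠ 2) (hfil : IsPowFiltration p F)
    (hF : ∀ H : Subgroup G, IsOmegaClosed p H) {E : ℕ} (hE : ∀ g : G, g ^ p ^ E = 1)
    {i : ℕ} (hi : 1 ≤ i) (K : Subgroup G) (hK : ∀ x, x ∈ K ↔ x ∈ F 1 ∧ x ^ p ^ i = 1) :
    ∃ H : ℕ → Subgroup K, IsPowerfullyCentralChain p i H := by
  let L : ℕ → Subgroup G := fun k =>
    { carrier := {a | a ∈ F (i + 1 - k) ∧ a ^ p ^ (k + 1) = 1}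
      one_mem' := ⟨one_mem _, one_pow _⟩
      mul_mem' := fun {x y} hx hy => ⟨mul_mem hx.1 hy.1,
        hF ⊤ _ x trivial y trivial hx.2 hy.2⟩
      inv_mem' := fun {x} hx => ⟨inv_mem hx.1, by rw [inv_pow, hx.2, inv_one]⟩ }
  have hL : ∀ k a, a ∈ L k ↔ a ∈ F (i + 1 - k) ∧ a ^ p ^ (k + 1) = 1 := fun _ _ => Iff.rfl
  refine ⟨fun k => if k = 0 then ⊥ else (L k).subgroupOf K, ?_, ?_, ?_, ?_⟩
  · simp
  · beta_reduce
    rw [if_neg (by omega), Subgroup.subgroupOf_eq_top]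
    intro x hx
    rw [hK] at hx
    rw [hL, show i + 1 - i = 1 by omega]
    exact ⟨hx.1, pow_prime_pow_mono (by omega) hx.2⟩
  · intro k _
    beta_reduce
    rw [if_neg (Nat.succ_ne_zero k)]
    split_ifs with hk
    · exact bot_le
    · intro x hx
      rw [Subgroup.mem_subgroupOf, hL] at hx ⊢
      exact ⟨hfil.anti (by omega) hx.1, pow_prime_pow_mono (by omega) hx.2⟩
  · intro k hk
    beta_reduce
    rw [if_neg (Nat.succ_ne_zero k), Subgroup.commutator_le]
    rintro ⟨a, haK⟩ ha ⟨b, hbK⟩ _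
    rw [Subgroup.mem_subgroupOf, hL] at ha
    obtain ⟨ha1, ha2⟩ := ha
    obtain ⟨hb1, hb2⟩ := (hK b).mp hbK
    obtain ⟨j, rfl⟩ : ∃ j, i = k + j := Nat.exists_eq_add_of_le hk.le
    rw [show k + j + 1 - (k + 1) = j by omega] at ha1
    change a ∈ F j at ha1
    change a ^ p ^ (k + 1 + 1) = 1 at ha2
    have hcomm : ⁅a, b⁆ ^ p ^ k = 1 := by
      obtain ⟨x, rfl⟩ := hfil.exists_pow_eq j a ha1
      have hx : x ^ p ^ (k + j + 2) = 1 := by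
        rw [← ha2, ← pow_mul, ← pow_add]; congr 2; omega
      have := hfil.comm_pow_pow hp hp2 (fun u => hF _) hE hx hb1 hb2 j (by omega)
      rwa [show k + j - j = k by omega] at this
    split_ifs with hk0
    · subst hk0
      have : (⁅(⟨a, haK⟩ : K), ⟨b, hbK⟩⁆ : K) = 1 := 
        Subtype.ext (show ⁅a, b⁆ = 1 by simpa using hcomm)
      rw [this]
      exact one_mem _
    · obtain ⟨c, hc, hcab⟩ := hfil.root (j + 1) _ (hfil.comm_mem_add_two hp hp2 ha1 hb1)
      have hcn : c ^ p ^ (k + 1) = 1 := by rw [pow_succ', pow_mul, hcab, hcomm]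
      have hcK : c ∈ K :=
        (hK c).mpr ⟨hfil.anti (by omega) hc, pow_prime_pow_mono (by omega) hcn⟩
      have e : (⁅(⟨a, haK⟩ : K), ⟨b, hbK⟩⁆ : K) = (⟨c, hcK⟩ : K) ^ p := Subtype.ext hcab.symm
      rw [e]
      refine pow_mem_subgroupPow ?_ p
      rw [Subgroup.mem_subgroupOf, hL]
      exact ⟨by rw [show k + j + 1 - k = j + 1 by omega]; exact hc, hcn⟩

end IsPowFiltration

theorem mem_omegaSubgroup {p : ℕ} {G : Type*} [Group G] {H : Subgroup G}
    (hH : IsOmegaClosed p H) (i : ℕ) (x : G) :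
    x ∈ omegaSubgroup p i H ↔ x ∈ H ∧ x ^ p ^ i = 1 := by
  refine ⟨fun hx => ?_, fun hx => Subgroup.subset_closure hx⟩
  induction hx using Subgroup.closure_induction with
  | mem x hx => exact hx
  | one => exact ⟨one_mem _, one_pow _⟩
  | mul x y _ _ h1 h2 => exact ⟨mul_mem h1.1 h2.1, hH i x h1.1 y h2.1 h1.2 h2.2⟩
  | inv x _ h => exact ⟨inv_mem h.1, by rw [inv_pow, h.2, inv_one]⟩

theorem IsPowerfullyCentralChain.isPowerful {p : ℕ} (hp2 : p ≠ 2) {G : Type*} [Group G] {n : ℕ}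
    (hn : 1 ≤ n) {H : ℕ → Subgroup G} (h : IsPowerfullyCentralChain p n H) : IsPowerful p G := by
  obtain ⟨m, rfl⟩ := Nat.exists_eq_add_of_le' hn
  rw [IsPowerful, if_neg hp2, commutator_def]
  have := h.2.2.2 m (Nat.lt_succ_self m)
  rw [h.2.1] at this
  exact this.trans (subgroupPow_mono le_top p)

end Helpers

theorem omega_statement_10 (p : ℕ) (hp : p.Prime) (hp2 : p ≠ 2) (G : Type*) [Group G]
    [Finite G] (hG : IsPGroup p G) (hpow : IsPowerful p G) (i : ℕ) (hi : 1 ≤ i) :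
    IsPowerfullyNilpotent p ↥(omegaSubgroup p i (subgroupPow (⊤ : Subgroup G) p)) ∧
      powerfulNilpotencyClass p ↥(omegaSubgroup p i (subgroupPow (⊤ : Subgroup G) p)) ≤ i := by
  have hfil := isPowFiltration_powSeries hp hp2 G hG hpow
  have hF := hpow.isOmegaClosed hp hp2 hG
  obtain ⟨E, hE⟩ := exists_pow_prime_pow_eq_one hp hG
  obtain ⟨H, hH⟩ := hfil.exists_chain hp hp2 hF hE hi
    (omegaSubgroup p i (subgroupPow (⊤ : Subgroup G) p)) (mem_omegaSubgroup (hF _) i)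
  exact ⟨⟨hH.isPowerful hp2 hi, i, H, hH⟩, Nat.sInf_le ⟨H, hH⟩⟩
end
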